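/- arXiv:0911.0354 — 3 statements merged into one kernel-verified Lean document; each statement's English description precedes it below -/
import Mathlib

section
/- Let (W,S) be a Coxeter system with S finite. Then there exists a constant N such that every base (s,w) satisfies ℓ(w) ≤ N. -/
variable {B : Type*} {W : Type*} [Group W] {M : CoxeterMatrix B}

/-- A subset `J` of the index set is *spherical* if the corresponding simple reflections
generate a finite subgroup. -/
def Spherical (cs : CoxeterSystem M W) (J : Set B) : Prop :=
  (Subgroup.closure (cs.simple '' J) : Set W).Finite

/-- Two indices are *adjacent* if the corresponding simple reflections generate a finite
subgroup. -/
def Adjacent (cs : CoxeterSystem M W) (i j : B) : Prop :=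
  (Subgroup.closure {cs.simple i, cs.simple j} : Set W).Finite

/-- A subset is *2-spherical* if every pair of its elements is adjacent. -/
def TwoSpherical (cs : CoxeterSystem M W) (J : Set B) : Prop :=
  ∀ i ∈ J, ∀ j ∈ J, Adjacent cs i j

/-- A subset is *irreducible* if it cannot be partitioned into two nonempty subsets whose
corresponding simple reflections commute elementwise. -/
def IrreducibleSubset (cs : CoxeterSystem M W) (J : Set B) : Prop :=
  ¬ ∃ K L : Set B, K.Nonempty ∧ L.Nonempty ∧ Disjoint K L ∧ K ∪ L = J ∧
      ∀ k ∈ K, ∀ l ∈ L, Commute (cs.simple k) (cs.simple l)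

/-- `perpIn cs T J` is the set `J⊥` of elements of `T ∖ J` whose simple reflections commute
with those of every element of `J`. -/
def perpIn (cs : CoxeterSystem M W) (T J : Set B) : Set B :=
  {i ∈ T \ J | ∀ j ∈ J, Commute (cs.simple i) (cs.simple j)}

/-- A subset `T` of the index set is *connected* if any two of its elements are joined by a
path inside `T` whose edges are adjacent pairs. -/
def ConnectedIn (cs : CoxeterSystem M W) (T : Set B) : Prop :=
  ∀ a ∈ T, ∀ b ∈ T,
    Relation.ReflTransGen (fun x y => x ∈ T ∧ y ∈ T ∧ Adjacent cs x y) a b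

/-- A subset `T` is *twist-rigid* if for every irreducible spherical subset `L ⊆ T` the set
`T ∖ (L ∪ L⊥)` is connected, where `L⊥` is taken inside `T`. -/
def TwistRigidIn (cs : CoxeterSystem M W) (T : Set B) : Prop :=
  ∀ L ⊆ T, IrreducibleSubset cs L → Spherical cs L →
    ConnectedIn cs (T \ (L ∪ perpIn cs T L))

/-- A pair `(s, w)` is a *base* if `ℓ(w⁻¹ s w) = 2 ℓ(w) + 1` and every reflection `t` with
`ℓ(t w) < ℓ(w)` generates together with `s` a finite subgroup. -/
def IsBase (cs : CoxeterSystem M W) (s : B) (w : W) : Prop :=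
  cs.length (w⁻¹ * cs.simple s * w) = 2 * cs.length w + 1 ∧
    ∀ t : W, cs.IsReflection t → cs.length (t * w) < cs.length w →
      (Subgroup.closure {cs.simple s, t} : Set W).Finite

/-- `J` is the *support* of `(s, w)` if it is the smallest subset of the index set containing
`s` with `w ∈ W_J`. -/
def IsSupport (cs : CoxeterSystem M W) (s : B) (w : W) (J : Set B) : Prop :=
  s ∈ J ∧ w ∈ Subgroup.closure (cs.simple '' J) ∧
    ∀ J' : Set B, s ∈ J' → w ∈ Subgroup.closure (cs.simple '' J') → J ⊆ J'

/-- A base `(s, w)` is *simple* if `w` is represented by a reduced word whose letters are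
pairwise distinct and distinct from `s`. -/
def IsSimpleBase (cs : CoxeterSystem M W) (s : B) (w : W) : Prop :=
  IsBase cs s w ∧ ∃ l : List B, w = cs.wordProd l ∧ cs.length w = l.length ∧
    l.Nodup ∧ s ∉ l

/-- The *shadow* of a base `(s, w)` with support `J`: the set of `j ∈ J` with
`ℓ((wj)⁻¹ s (wj)) ≤ ℓ(w⁻¹ s w)`. -/
def shadow (cs : CoxeterSystem M W) (s : B) (w : W) (J : Set B) : Set B :=
  {j ∈ J | cs.length ((w * cs.simple j)⁻¹ * cs.simple s * (w * cs.simple j)) ≤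
    cs.length (w⁻¹ * cs.simple s * w)}

/-! Let `(s, w)` be a base and let `β = w⁻¹ α_s` be its root in the geometric representation. If
`(s, w t)` is a longer base, then `s` and `w t w⁻¹` generate a finite dihedral group, so the
negative number `⟨β, α_t⟩` is a root of a Chebyshev polynomial `S_n`: it is an algebraic integer,
all of whose conjugates are bounded by `2`, in the number field generated by the Gram matrix. By
Northcott there are finitely many such numbers. Passing from `w` to `w t` negates `⟨β, α_t⟩` and
decreases the other numbers `⟨β, α_b⟩` by one of finitely many amounts, hence these numbers,
truncated at `-3`, take finitely many values.

Suppose that two bases `(s, w)` and `(s, w u)`, with `ℓ(w u) = ℓ(w) + ℓ(u)`, have the same truncated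
values. At the letters of `u` the value for `w` is at least `-2`, so the difference `γ` of the two
roots is orthogonal to these letters. Hence `u` fixes `γ`, which makes `γ` isotropic and orthogonal
to both roots. Unless `α_s + w γ` and `α_s - w γ` are both positive, some reflection in the
definition of a base would generate with `s` a finite group although the two roots pair to `2`. Two
positive roots with sum `2 α_s` are both `α_s`, so `γ = 0` and `u` is trivial. The length of `w` is
therefore at most the number of possible lists of truncated values. -/

section ChebyshevS

open Polynomial Polynomial.Chebyshev

lemma chebyshevS_eval_neg {R : Type*} [CommRing R] (n : ℤ) (x : R) :
    (S R n).eval (-x) = n.negOnePow * (S R n).eval x := by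
  induction n using Polynomial.Chebyshev.induct with
  | zero => simp
  | one => simp
  | add_two n ih₁ ih₀ =>
    simp only [S_add_two, eval_sub, eval_mul, eval_X, ih₁, ih₀, Int.negOnePow_add,
      Int.negOnePow_one, Int.negOnePow_even 2 even_two]
    push_cast
    ring
  | neg_add_one n ih₀ ih₁ =>
    simp only [S_sub_one, eval_sub, eval_mul, eval_X, ih₁, ih₀, Int.negOnePow_add,
      Int.negOnePow_sub, Int.negOnePow_one]
    push_cast
    ring

lemma chebyshevS_eval_two_mul {R : Type*} [CommRing R] (n : ℕ) (x : R) :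
    (S R (2 * n)).eval x = (S R n).eval (x ^ 2 - 2) + (S R (n - 1)).eval (x ^ 2 - 2) ∧
      (S R (2 * n + 1)).eval x = x * (S R n).eval (x ^ 2 - 2) := by
  induction n with
  | zero => simp
  | succ n ih =>
    have even : S R (2 * (n + 1 : ℕ)) = X * S R (2 * n + 1) - S R (2 * n) := by
      rw [← S_add_two]; push_cast; ring_nf
    have odd : S R (2 * (n + 1 : ℕ) + 1) = X * S R (2 * (n + 1 : ℕ)) - S R (2 * n + 1) := by
      rw [S_add_one]; push_cast; ring_nf
    have half : S R (n + 1 : ℕ) = X * S R n - S R (n - 1) := mod_cast S_add_one R n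
    rw [odd, even, half]
    simp only [eval_sub, eval_mul, eval_X, ih.1, ih.2, Nat.cast_add_one, add_sub_cancel_right]
    constructor <;> ring

lemma isMonicOfDegree_chebyshevS (R : Type*) [CommRing R] [Nontrivial R] (n : ℕ) :
    (S R n).IsMonicOfDegree n := by
  induction n using Nat.twoStepInduction with
  | zero => simp
  | one => simpa using isMonicOfDegree_X R
  | more n ih₀ ih₁ =>
    have product := (isMonicOfDegree_X R).mul ih₁
    rw [add_comm 1] at product
    push_cast at product ⊢
    rw [S_add_two]
    exact product.sub (by rw [ih₀.natDegree_eq]; lia)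

lemma isIntegral_of_chebyshevS_eval_eq_zero {R : Type*} [CommRing R] {n : ℕ} {x : R}
    (h : (S R n).eval x = 0) : IsIntegral ℤ x := by
  refine ⟨S ℤ n, (isMonicOfDegree_chebyshevS ℤ n).monic, ?_⟩
  rw [← eval_map, map_S, h]

lemma norm_le_two_of_chebyshevS_eval_eq_zero {F : Type*} [NormedField F] {n : ℕ} {x : F}
    (h : (S F n).eval x = 0) : ‖x‖ ≤ 2 := by
  by_contra! two_lt
  have strictMono : StrictMono fun k : ℕ ↦ ‖(S F (k - 1)).eval x‖ := by
    refine strictMono_nat_of_lt_succ fun k ↦ ?_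
    induction k with
    | zero => simp
    | succ k ih =>
      have recurrence : (S F (k + 1)).eval x = x * (S F k).eval x - (S F (k - 1)).eval x := by
        simp [S_add_one]
      simp only [Nat.cast_add_one, add_sub_cancel_right, recurrence] at ih ⊢
      calc ‖(S F k).eval x‖ < ‖x‖ * ‖(S F k).eval x‖ - ‖(S F (k - 1)).eval x‖ := by
            nlinarith [norm_nonneg ((S F (k - 1)).eval x)]
        _ ≤ ‖x * (S F k).eval x - (S F (k - 1)).eval x‖ := by
            rw [← norm_mul]; exact norm_sub_norm_le _ _
  simpa [h] using strictMono n.succ_pos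

lemma finite_roots_chebyshevS (K : Type*) [Field K] [NumberField K] :
    {x : K | ∃ n : ℕ, (S K n).eval x = 0}.Finite := by
  refine (NumberField.Embeddings.finite_of_norm_le K ℂ 2).subset ?_
  rintro x ⟨n, hn⟩
  refine ⟨isIntegral_of_chebyshevS_eval_eq_zero hn, fun φ ↦
    norm_le_two_of_chebyshevS_eval_eq_zero (n := n) ?_⟩
  rw [← map_S φ, eval_map, eval₂_at_apply, hn, map_zero]

end ChebyshevS

section Reflections

open Module Polynomial.Chebyshev

variable {R V : Type*} [CommRing R] [AddCommGroup V] [Module R V]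

lemma form_reflection {Q : LinearMap.BilinForm R V} (symm : Q.IsSymm) {x : V} (hx : Q x x = 2)
    (y z : V) : Q (reflection hx y) (reflection hx z) = Q y z := by
  simp only [reflection_apply, map_sub, map_smul, LinearMap.sub_apply, LinearMap.smul_apply,
    smul_eq_mul, hx, symm.eq y x]
  ring

lemma chebyshevS_eval_eq_zero_of_reflection_mul_pow_eq_one {Q : LinearMap.BilinForm R V}
    (symm : Q.IsSymm) {x y : V} (hx : Q x x = 2) (hy : Q y y = 2)
    (independent : LinearIndependent R ![x, y]) {n : ℕ}
    (h : (reflection hx * reflection hy) ^ (n + 1) = 1) :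
    (S R (2 * n + 1)).eval (Q x y) = 0 := by
  have hyx : Q y x = Q x y := symm.eq y x
  have power := reflection_mul_reflection_pow_apply_self hx hy (n + 1)
  rw [h, LinearEquiv.coe_one, id, hyx, ← pow_two, Nat.cast_add_one, add_sub_cancel_right] at power
  have coeff_y := (LinearIndependent.pair_iff.mp independent _ _
    ((by rw [sub_smul, ← sub_eq_zero.mpr power]; module) :
      (1 - ((S R (n + 1)).eval (Q x y ^ 2 - 2) + (S R n).eval (Q x y ^ 2 - 2))) • x +
        ((S R n).eval (Q x y ^ 2 - 2) * Q x y) • y = 0)).2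
  rw [(chebyshevS_eval_two_mul n _).2, mul_comm, coeff_y]

lemma reflection_mul_reflection_sq_eq_one {x y : V} {f g : Dual R V} (hf : f x = 2) (hg : g y = 2)
    (hfy : f y = 0) (hgx : g x = 0) : (reflection hf * reflection hg) ^ 2 = 1 := by
  ext z
  simp only [pow_two, LinearEquiv.mul_apply, reflection_apply, map_sub, map_smul, hf, hg, hfy, hgx,
    LinearEquiv.coe_one, id]
  module

lemma reflection_mul_reflection_pow_eq_one [IsDomain R] {x y : V} {f g : Dual R V} (hf : f x = 2)
    (hg : g y = 2) {u : R} (hu : u ≠ 0) (hfg : f y * g x = u ^ 2) {n : ℕ}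
    (h : (S R n).eval u = 0) : (reflection hf * reflection hg) ^ (n + 1) = 1 := by
  ext z
  rw [reflection_mul_reflection_pow_apply hf hg (n + 1) z (u ^ 2 - 2) (by rw [hfg])]
  obtain ⟨k, rfl | rfl⟩ := n.even_or_odd'
  · have vanish : (S R k).eval (u ^ 2 - 2) + (S R (k - 1)).eval (u ^ 2 - 2) = 0 := by
      rw [← (chebyshevS_eval_two_mul k u).1]
      exact_mod_cast h
    have index₁ : (((2 * k + 1 : ℕ) : ℤ) - 2) / 2 = k - 1 := by lia
    have index₂ : (((2 * k + 1 : ℕ) : ℤ) - 1) / 2 = k := by lia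
    have index₃ : (((2 * k + 1 : ℕ) : ℤ) - 3) / 2 = k - 1 := by lia
    have index₄ : ((2 * k + 1 : ℕ) : ℤ) / 2 = k := by lia
    rw [index₁, index₂, index₃, index₄, vanish]
    simp
  · have vanish : (S R k).eval (u ^ 2 - 2) = 0 := by
      refine (mul_eq_zero.mp ?_).resolve_left hu
      rw [← (chebyshevS_eval_two_mul k u).2]
      exact_mod_cast h
    have index₁ : (((2 * k + 1 + 1 : ℕ) : ℤ) - 2) / 2 = k := by lia
    have index₂ : (((2 * k + 1 + 1 : ℕ) : ℤ) - 1) / 2 = k := by lia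
    rw [index₁, index₂, vanish]
    simp

end Reflections

section GeometricRepresentation

open Module Polynomial.Chebyshev Real

lemma sin_pi_div_pos {m : ℕ} (hm : 2 ≤ m) : 0 < sin (π / m) :=
  sin_pos_of_pos_of_lt_pi (by positivity) (div_lt_self pi_pos (by exact_mod_cast hm))

lemma chebyshevS_eval_two_mul_cos_pi_div_eq_zero {n : ℕ} (hn : n ≠ 0) :
    (S ℝ n).eval (2 * cos (π / (n + 1 : ℕ))) = 0 := by
  have sin_pos := sin_pi_div_pos (show 2 ≤ n + 1 by lia)
  refine (mul_eq_zero.mp ?_).resolve_right sin_pos.ne'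
  rw [S_two_mul_real_cos]
  push_cast
  rw [mul_div_cancel₀ _ (by positivity), sin_pi]

-- `π / 0 = 0` makes `m = 0` the case of infinite order, where the evaluation point is `2`.
lemma chebyshevS_eval_two_mul_cos_pi_div_nonneg {m k : ℕ} (h : m = 0 ∨ k < m) :
    0 ≤ (S ℝ k).eval (2 * cos (π / m)) := by
  obtain rfl | hkm := h
  · simp only [Nat.cast_zero, div_zero, cos_zero, mul_one, S_eval_two]
    positivity
  obtain hm | hm := Nat.lt_or_ge m 2
  · obtain rfl : k = 0 := by lia
    simp
  refine nonneg_of_mul_nonneg_left ?_ (sin_pi_div_pos hm)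
  rw [S_two_mul_real_cos]
  refine sin_nonneg_of_nonneg_of_le_pi (by positivity) ?_
  rw [← mul_div_assoc, div_le_iff₀ (by positivity), mul_comm]
  gcongr
  exact_mod_cast hkm

/-- The entry of the Gram matrix of the simple roots, normalised so that the roots have norm `2`.
An infinite order is encoded by `M i j = 0`, and `π / 0 = 0` gives the entry `-2` for it. -/
noncomputable def coxeterCoeff (M : CoxeterMatrix B) (i j : B) : ℝ :=
  -(2 * cos (π / M i j))

lemma coxeterCoeff_self (i : B) : coxeterCoeff M i i = 2 := by
  simp [coxeterCoeff]

lemma coxeterCoeff_comm (i j : B) : coxeterCoeff M i j = coxeterCoeff M j i := by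
  rw [coxeterCoeff, coxeterCoeff, M.symmetric]

lemma coxeterCoeff_nonpos {i j : B} (h : i ≠ j) : coxeterCoeff M i j ≤ 0 := by
  have order_ne_one : M i j ≠ 1 := M.off_diagonal i j h
  have cos_nonneg := chebyshevS_eval_two_mul_cos_pi_div_nonneg (m := M i j) (k := 1) (by lia)
  rw [Nat.cast_one, S_one, Polynomial.eval_X] at cos_nonneg
  exact neg_nonpos.mpr cos_nonneg

/-- The invariant symmetric bilinear form on the space spanned by the simple roots. -/
noncomputable def coxeterForm (M : CoxeterMatrix B) : LinearMap.BilinForm ℝ (B →₀ ℝ) :=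
  Finsupp.linearCombination ℝ fun i ↦ Finsupp.linearCombination ℝ (coxeterCoeff M i)

/-- The simple root attached to `i`. -/
noncomputable def simpleRoot (i : B) : B →₀ ℝ := Finsupp.single i 1

lemma coxeterForm_simpleRoot (i j : B) :
    coxeterForm M (simpleRoot i) (simpleRoot j) = coxeterCoeff M i j := by
  simp [coxeterForm, simpleRoot]

lemma coxeterForm_simpleRoot_self (i : B) : coxeterForm M (simpleRoot i) (simpleRoot i) = 2 := by
  rw [coxeterForm_simpleRoot, coxeterCoeff_self]

lemma isSymm_coxeterForm : (coxeterForm M).IsSymm := by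
  suffices coxeterForm M = (coxeterForm M).flip from ⟨fun x y ↦ LinearMap.congr_fun₂ this x y⟩
  ext i j
  simp [coxeterForm, coxeterCoeff_comm i j]

lemma isLiftable_reflection_simpleRoot :
    M.IsLiftable fun i ↦ reflection (coxeterForm_simpleRoot_self (M := M) i) := by
  intro i j
  dsimp only
  obtain hm | hm | hm | hm : M i j = 0 ∨ M i j = 1 ∨ M i j = 2 ∨ 2 < M i j := by lia
  · rw [hm, pow_zero]
  · obtain rfl : i = j := by
      by_contra hij
      exact M.off_diagonal i j hij hm
    ext1 v
    simpa [hm] using involutive_reflection _ v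
  · have orthogonal : coxeterCoeff M i j = 0 := by simp [coxeterCoeff, hm]
    rw [hm]
    exact reflection_mul_reflection_sq_eq_one _ _
      (by rw [coxeterForm_simpleRoot, orthogonal])
      (by rw [coxeterForm_simpleRoot, coxeterCoeff_comm, orthogonal])
  · obtain ⟨n, hn⟩ : ∃ n, M i j = n + 1 := ⟨M i j - 1, by lia⟩
    have cos_pos : 0 < cos (π / M i j) := by
      refine cos_pos_of_mem_Ioo ⟨by linarith [pi_pos, show 0 ≤ π / M i j by positivity], ?_⟩
      exact div_lt_div_of_pos_left pi_pos two_pos (by exact_mod_cast hm)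
    rw [hn] at cos_pos ⊢
    refine reflection_mul_reflection_pow_eq_one _ _ (mul_pos two_pos cos_pos).ne' ?_
      (chebyshevS_eval_two_mul_cos_pi_div_eq_zero (by lia))
    rw [coxeterForm_simpleRoot, coxeterForm_simpleRoot, coxeterCoeff_comm j, coxeterCoeff, hn]
    ring

/-- The geometric representation, in which each simple reflection acts by reflection in its
simple root. -/
noncomputable def geomRep (cs : CoxeterSystem M W) : W →* ((B →₀ ℝ) ≃ₗ[ℝ] (B →₀ ℝ)) :=
  cs.lift ⟨_, isLiftable_reflection_simpleRoot⟩

variable (cs : CoxeterSystem M W)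

lemma geomRep_simple (i : B) :
    geomRep cs (cs.simple i) = reflection (coxeterForm_simpleRoot_self (M := M) i) :=
  cs.lift_apply_simple _ i

lemma coxeterForm_geomRep (w : W) (x y : B →₀ ℝ) :
    coxeterForm M (geomRep cs w x) (geomRep cs w y) = coxeterForm M x y := by
  induction w using cs.simple_induction_left generalizing x y with
  | one => simp
  | mul_simple_left w i ih =>
    rw [map_mul, geomRep_simple, LinearEquiv.mul_apply, LinearEquiv.mul_apply,
      form_reflection isSymm_coxeterForm, ih]

lemma coxeterForm_root_self (g : W) (i : B) :
    coxeterForm M (geomRep cs g (simpleRoot i)) (geomRep cs g (simpleRoot i)) = 2 := by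
  rw [coxeterForm_geomRep, coxeterForm_simpleRoot_self]

lemma geomRep_conj_simple (g : W) (i : B) :
    geomRep cs (g * cs.simple i * g⁻¹) = reflection (coxeterForm_root_self cs g i) := by
  ext1 v
  have invariance := coxeterForm_geomRep cs g (simpleRoot i) (geomRep cs g⁻¹ v)
  rw [← LinearEquiv.mul_apply, ← map_mul, mul_inv_cancel, map_one, LinearEquiv.coe_one, id]
    at invariance
  rw [map_mul, map_mul, LinearEquiv.mul_apply, LinearEquiv.mul_apply, geomRep_simple,
    reflection_apply, reflection_apply, map_sub, map_smul, ← LinearEquiv.mul_apply, ← map_mul,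
    mul_inv_cancel, map_one, LinearEquiv.coe_one, id, invariance]

end GeometricRepresentation

section Positivity

open Polynomial.Chebyshev CoxeterSystem

variable (cs : CoxeterSystem M W)

lemma geomRep_simple_apply (i : B) (v : B →₀ ℝ) :
    geomRep cs (cs.simple i) v = v - coxeterForm M (simpleRoot i) v • simpleRoot i := by
  rw [geomRep_simple, Module.reflection_apply]

lemma geomRep_mul_apply (v w : W) (x : B →₀ ℝ) :
    geomRep cs (v * w) x = geomRep cs v (geomRep cs w x) := by
  rw [map_mul, LinearEquiv.mul_apply]

lemma simpleRoot_nonneg (i : B) : 0 ≤ simpleRoot i :=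
  Finsupp.single_nonneg.mpr zero_le_one

lemma geomRep_alternatingWord_simpleRoot (i j : B) (k : ℕ) :
    geomRep cs (cs.wordProd (alternatingWord i j k)) (simpleRoot i) =
      (S ℝ k).eval (-coxeterCoeff M i j) • simpleRoot (if Even k then i else j) +
        (S ℝ (k - 1)).eval (-coxeterCoeff M i j) • simpleRoot (if Even k then j else i) := by
  induction k with
  | zero => simp [alternatingWord]
  | succ k ih =>
    rw [alternatingWord_succ', cs.wordProd_cons, geomRep_mul_apply, ih, geomRep_simple_apply]
    rcases k.even_or_odd with hk | hk <;>
    · simp only [Nat.even_add_one, hk, Nat.not_even_iff_odd.mpr, not_true, not_false_eq_true,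
        if_true, if_false, map_add, map_smul, coxeterForm_simpleRoot, coxeterCoeff_self,
        coxeterCoeff_comm j i, Nat.cast_add_one, S_add_one, Polynomial.eval_sub,
        Polynomial.eval_mul, Polynomial.eval_X, add_sub_cancel_right, smul_eq_mul]
      module

lemma geomRep_alternatingWord_simpleRoot_mem_cone {i j : B} {k : ℕ} (h : M i j = 0 ∨ k < M i j) :
    ∃ a b : ℝ, 0 ≤ a ∧ 0 ≤ b ∧
      geomRep cs (cs.wordProd (alternatingWord i j k)) (simpleRoot i) =
        a • simpleRoot i + b • simpleRoot j := by
  have nonneg {n : ℕ} (hn : n ≤ k) : 0 ≤ (S ℝ n).eval (-coxeterCoeff M i j) := by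
    rw [coxeterCoeff, neg_neg]
    exact chebyshevS_eval_two_mul_cos_pi_div_nonneg (h.imp_right hn.trans_lt)
  have pred_nonneg : 0 ≤ (S ℝ (k - 1)).eval (-coxeterCoeff M i j) := by
    cases k with
    | zero => simp
    | succ k => simpa using nonneg k.le_succ
  rw [geomRep_alternatingWord_simpleRoot]
  split_ifs
  · exact ⟨_, _, nonneg le_rfl, pred_nonneg, rfl⟩
  · exact ⟨_, _, pred_nonneg, nonneg le_rfl, add_comm _ _⟩

lemma exists_eq_mul_wordProd_of_not_isRightDescent (J : Set B) (w : W) :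
    ∃ (v : W) (ω : List B), (∀ j ∈ ω, j ∈ J) ∧ w = v * cs.wordProd ω ∧
      cs.length w = cs.length v + ω.length ∧ ∀ j ∈ J, ¬cs.IsRightDescent v j := by
  induction hn : cs.length w generalizing w with
  | zero =>
    refine ⟨w, [], by simp, by simp, by simp [hn], fun j _ ↦ ?_⟩
    rw [cs.length_eq_zero_iff.mp hn]
    exact cs.not_isRightDescent_one j
  | succ n ih =>
    by_cases! hJ : ∃ j ∈ J, cs.IsRightDescent w j
    · obtain ⟨j, hj, descent⟩ := hJ
      have length_eq := cs.isRightDescent_iff.mp descent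
      obtain ⟨v, ω, hω, factor, length_factor, hv⟩ := ih (w * cs.simple j) (by lia)
      refine ⟨v, ω ++ [j], by simpa [or_imp, forall_and] using ⟨hω, hj⟩, ?_, ?_, hv⟩
      · rw [cs.wordProd_append, cs.wordProd_singleton, ← mul_assoc, ← factor,
          cs.simple_mul_simple_cancel_right]
      · rw [List.length_append, List.length_singleton, ← add_assoc, ← length_factor]
    · exact ⟨w, [], by simp, by simp, by simp [hn], hJ⟩

variable {cs} in
lemma eq_alternatingWord_of_isReduced_append {i j : B} {ω : List B}
    (letters : ∀ k ∈ ω, k = i ∨ k = j) (reduced : cs.IsReduced (ω ++ [i])) :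
    ω = alternatingWord i j ω.length := by
  induction ω using List.reverseRecOn generalizing i j with
  | nil => rfl
  | append_singleton ω k ih =>
    have k_ne : k ≠ i := by
      rintro rfl
      have length_eq := reduced.eq
      have length_le := cs.length_wordProd_le ω
      simp only [cs.wordProd_append, cs.wordProd_singleton, cs.simple_mul_simple_cancel_right,
        List.length_append, List.length_singleton] at length_eq
      lia
    obtain rfl : k = j := (letters k (by simp)).resolve_left k_ne
    have reduced_init : cs.IsReduced (ω ++ [k]) := by
      simpa only [List.take_left] using reduced.take (ω ++ [k]).length
    have hω := ih (fun l hl ↦ (letters l (by simp [hl])).symm) reduced_init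
    rw [List.length_append, List.length_singleton, alternatingWord_succ, ← hω,
      List.concat_eq_append]

lemma exists_eq_mul_alternatingWord {w : W} {i : B} (h : ¬cs.IsRightDescent w i) (j : B) :
    ∃ (v : W) (k : ℕ), w = v * cs.wordProd (alternatingWord i j k) ∧
      cs.length w = cs.length v + k ∧ (M i j = 0 ∨ k < M i j) ∧
      ¬cs.IsRightDescent v i ∧ ¬cs.IsRightDescent v j := by
  obtain ⟨v, ω, letters, rfl, length_eq, hv⟩ :=
    exists_eq_mul_wordProd_of_not_isRightDescent cs {i, j} w
  have reduced : cs.IsReduced (ω ++ [i]) := by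
    refine le_antisymm (cs.length_wordProd_le _) ?_
    have length_succ := cs.not_isRightDescent_iff.mp h
    have length_le := cs.length_mul_le v (cs.wordProd (ω ++ [i]))
    rw [cs.wordProd_append, cs.wordProd_singleton, ← mul_assoc] at length_le
    rw [cs.wordProd_append, cs.wordProd_singleton, List.length_append, List.length_singleton]
    lia
  have alternating := eq_alternatingWord_of_isReduced_append letters reduced
  have length_lt : M i j = 0 ∨ ω.length < M i j := by
    by_contra! order_le
    refine cs.not_isReduced_alternatingWord j i (m := ω.length + 1) ?_ ?_ ?_
    · rw [M.symmetric]; exact order_le.1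
    · rw [M.symmetric]; lia
    · rwa [alternatingWord_succ, ← alternating, List.concat_eq_append]
  exact ⟨v, ω.length, by rw [← alternating], length_eq, length_lt, hv i (by simp), hv j (by simp)⟩

lemma geomRep_simpleRoot_nonneg {w : W} {i : B} (h : ¬cs.IsRightDescent w i) :
    0 ≤ geomRep cs w (simpleRoot i) := by
  induction hn : cs.length w using Nat.strong_induction_on generalizing w i with
  | _ n ih =>
  obtain rfl | hw := eq_or_ne w 1
  · simpa using simpleRoot_nonneg i
  obtain ⟨j, hj⟩ := cs.exists_rightDescent_of_ne_one hw
  obtain ⟨v, k, rfl, length_eq, length_lt, hvi, hvj⟩ := exists_eq_mul_alternatingWord cs h j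
  have k_ne_zero : k ≠ 0 := by
    rintro rfl
    rw [alternatingWord, cs.wordProd_nil, mul_one] at hj
    exact hvj hj
  obtain ⟨a, b, ha, hb, root_eq⟩ := geomRep_alternatingWord_simpleRoot_mem_cone cs length_lt
  rw [geomRep_mul_apply, root_eq, map_add, map_smul, map_smul]
  exact add_nonneg (smul_nonneg ha (ih _ (by lia) hvi rfl))
    (smul_nonneg hb (ih _ (by lia) hvj rfl))

end Positivity

section Roots

open Polynomial.Chebyshev

variable (cs : CoxeterSystem M W)

lemma geomRep_inv_apply_geomRep (w : W) (x : B →₀ ℝ) : geomRep cs w⁻¹ (geomRep cs w x) = x := by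
  rw [← geomRep_mul_apply, inv_mul_cancel, map_one, LinearEquiv.coe_one, id]

lemma geomRep_simple_simpleRoot (i : B) :
    geomRep cs (cs.simple i) (simpleRoot i) = -simpleRoot i := by
  rw [geomRep_simple, Module.reflection_apply_self]

lemma geomRep_simpleRoot_nonpos {w : W} {i : B} (h : cs.IsRightDescent w i) :
    geomRep cs w (simpleRoot i) ≤ 0 := by
  have nonneg := geomRep_simpleRoot_nonneg cs (cs.isRightDescent_iff_not_isRightDescent_mul.mp h)
  rwa [geomRep_mul_apply, geomRep_simple_simpleRoot, map_neg, neg_nonneg] at nonneg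

lemma not_simpleRoot_nonpos (i : B) : ¬simpleRoot i ≤ 0 := fun h ↦
  absurd (h i) (by simp [simpleRoot])

lemma geomRep_injective : Function.Injective (geomRep cs) := by
  refine (injective_iff_map_eq_one _).mpr fun w hw ↦ ?_
  by_contra w_ne_one
  obtain ⟨i, hi⟩ := cs.exists_rightDescent_of_ne_one w_ne_one
  have nonpos := geomRep_simpleRoot_nonpos cs hi
  rw [hw] at nonpos
  exact not_simpleRoot_nonpos i nonpos

lemma conj_simple_eq_of_root_eq {g h : W} {i j : B}
    (eq : geomRep cs g (simpleRoot i) = geomRep cs h (simpleRoot j)) :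
    g * cs.simple i * g⁻¹ = h * cs.simple j * h⁻¹ := by
  apply geomRep_injective cs
  simp only [geomRep_conj_simple, eq]

lemma geomRep_simple_apply_apply_of_ne {i l : B} (h : l ≠ i) (v : B →₀ ℝ) :
    geomRep cs (cs.simple i) v l = v l := by
  simp [geomRep_simple_apply, simpleRoot, h.symm]

lemma eq_simpleRoot_of_forall_ne {v : B →₀ ℝ} {t : B} (nonneg : 0 ≤ v)
    (norm : coxeterForm M v v = 2) (h : ∀ l ≠ t, v l = 0) : v = simpleRoot t := by
  have v_eq : v = v t • simpleRoot t := by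
    ext l
    obtain rfl | hl := eq_or_ne l t
    · simp [simpleRoot]
    · simp [simpleRoot, h l hl, hl.symm]
  rw [v_eq, map_smul, map_smul, LinearMap.smul_apply, coxeterForm_simpleRoot_self, smul_eq_mul,
    smul_eq_mul] at norm
  have coeff : v t = 1 := by nlinarith [show 0 ≤ v t from nonneg t]
  rw [v_eq, coeff, one_smul]

lemma root_nonneg_or_nonpos (g : W) (i : B) :
    0 ≤ geomRep cs g (simpleRoot i) ∨ geomRep cs g (simpleRoot i) ≤ 0 :=
  (em (cs.IsRightDescent g i)).symm.imp (geomRep_simpleRoot_nonneg cs)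
    (geomRep_simpleRoot_nonpos cs)

lemma geomRep_simple_root_nonneg {g : W} {i t : B} (nonneg : 0 ≤ geomRep cs g (simpleRoot i))
    (ne : geomRep cs g (simpleRoot i) ≠ simpleRoot t) :
    0 ≤ geomRep cs (cs.simple t) (geomRep cs g (simpleRoot i)) := by
  obtain ⟨l, hlt, hl⟩ : ∃ l ≠ t, geomRep cs g (simpleRoot i) l ≠ 0 := by
    contrapose! ne
    exact eq_simpleRoot_of_forall_ne nonneg (coxeterForm_root_self cs g i) ne
  rw [← geomRep_mul_apply]
  refine (root_nonneg_or_nonpos cs _ i).resolve_right fun nonpos ↦ hl ?_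
  have coordinate := nonpos l
  rw [geomRep_mul_apply, geomRep_simple_apply_apply_of_ne cs hlt] at coordinate
  exact le_antisymm coordinate (nonneg l)

lemma isRightInversion_of_not_root_nonneg {g w : W} {i : B}
    (nonneg : 0 ≤ geomRep cs g (simpleRoot i)) (h : ¬0 ≤ geomRep cs (w * g) (simpleRoot i)) :
    cs.IsRightInversion w (g * cs.simple i * g⁻¹) := by
  refine ⟨⟨g, i, rfl⟩, ?_⟩
  induction hn : cs.length w generalizing w g with
  | zero =>
    rw [cs.length_eq_zero_iff.mp hn, one_mul] at h
    exact absurd nonneg h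
  | succ n ih =>
    obtain ⟨t, ht⟩ := cs.exists_rightDescent_of_ne_one (w := w) (by rintro rfl; simp at hn)
    have length_eq := cs.isRightDescent_iff.mp ht
    by_cases eq : geomRep cs g (simpleRoot i) = simpleRoot t
    · have reflection_eq := conj_simple_eq_of_root_eq cs (g := g) (h := 1) (i := i) (j := t)
        (by simpa using eq)
      rw [one_mul, inv_one, mul_one] at reflection_eq
      rw [reflection_eq]
      lia
    · have shorter := ih (g := cs.simple t * g) (w := w * cs.simple t)
        (by rw [geomRep_mul_apply]; exact geomRep_simple_root_nonneg cs nonneg eq)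
        (by rwa [← mul_assoc, cs.simple_mul_simple_cancel_right]) (by lia)
      have conj_eq : w * cs.simple t * (cs.simple t * g * cs.simple i * (cs.simple t * g)⁻¹) =
          w * (g * cs.simple i * g⁻¹) * cs.simple t := by
        simp [mul_assoc]
      rw [conj_eq] at shorter
      have := cs.length_mul_simple (w * (g * cs.simple i * g⁻¹)) t
      lia

lemma linearIndependent_pair_of_form_self_eq_two {K V : Type*} [Field K] [CharZero K]
    [AddCommGroup V] [Module K V] {Q : LinearMap.BilinForm K V} {x y : V} (hx : Q x x = 2)
    (hy : Q y y = 2) (ne : x ≠ y) (ne_neg : x ≠ -y) : LinearIndependent K ![x, y] := by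
  have x_ne_zero : x ≠ 0 := by rintro rfl; simp at hx
  refine (LinearIndependent.pair_iff' x_ne_zero).mpr ?_
  rintro a rfl
  have mul_self_eq_one : a * a = 1 := by
    simp only [map_smul, LinearMap.smul_apply, smul_eq_mul, hx] at hy
    linear_combination hy / 2
  obtain rfl | rfl := mul_self_eq_one_iff.mp mul_self_eq_one <;> simp at ne ne_neg

lemma exists_chebyshevS_eval_form_eq_zero {g h : W} {i j : B}
    (finite : (Subgroup.closure {g * cs.simple i * g⁻¹, h * cs.simple j * h⁻¹} : Set W).Finite)
    (ne : geomRep cs g (simpleRoot i) ≠ geomRep cs h (simpleRoot j))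
    (ne_neg : geomRep cs g (simpleRoot i) ≠ -geomRep cs h (simpleRoot j)) :
    ∃ n : ℕ, (S ℝ n).eval
      (coxeterForm M (geomRep cs g (simpleRoot i)) (geomRep cs h (simpleRoot j))) = 0 := by
  set H := Subgroup.closure {g * cs.simple i * g⁻¹, h * cs.simple j * h⁻¹}
  have : Finite H := finite
  have mem : g * cs.simple i * g⁻¹ * (h * cs.simple j * h⁻¹) ∈ H :=
    mul_mem (Subgroup.subset_closure (by simp)) (Subgroup.subset_closure (by simp))
  obtain ⟨m, hm, power⟩ := isOfFinOrder_iff_pow_eq_one.mp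
    (Submonoid.isOfFinOrder_coe.mpr (isOfFinOrder_of_finite (⟨_, mem⟩ : H)))
  obtain ⟨n, rfl⟩ := Nat.exists_eq_add_of_le' hm
  refine ⟨2 * n + 1, ?_⟩
  have hx := coxeterForm_root_self cs g i
  have hy := coxeterForm_root_self cs h j
  refine chebyshevS_eval_eq_zero_of_reflection_mul_pow_eq_one isSymm_coxeterForm hx hy
    (linearIndependent_pair_of_form_self_eq_two hx hy ne ne_neg) ?_
  rw [← geomRep_conj_simple, ← geomRep_conj_simple, ← map_mul, ← map_pow, power, map_one]

end Roots

section FormValues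

open Polynomial.Chebyshev

lemma finite_closure_le {G : Type*} [AddCommGroup G] [LinearOrder G] [IsOrderedAddMonoid G]
    [Archimedean G] {D : Set G} (finite : D.Finite) (nonneg : ∀ d ∈ D, 0 ≤ d) (C : G) :
    {x ∈ AddSubmonoid.closure D | x ≤ C}.Finite := by
  induction D, finite using Set.Finite.induction_on with
  | empty => exact (Set.finite_singleton 0).subset fun x hx ↦ by simpa using hx.1
  | @insert d D _ _ ih =>
    have nonneg_D : ∀ e ∈ D, 0 ≤ e := fun e he ↦ nonneg e (Set.mem_insert_of_mem d he)
    have ih := ih nonneg_D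
    obtain d_eq | d_pos := (nonneg d (Set.mem_insert d D)).eq_or_lt
    · rwa [← d_eq, AddSubmonoid.closure_insert_zero]
    · obtain ⟨N, hN⟩ := Archimedean.arch C d_pos
      refine (((Set.finite_Iic N).image2 (fun n y ↦ n • d + y)) ih).subset ?_
      rintro x ⟨hx, x_le⟩
      rw [← Set.singleton_union, AddSubmonoid.closure_union, AddSubmonoid.mem_sup] at hx
      obtain ⟨_, hz, y, hy, rfl⟩ := hx
      obtain ⟨n, rfl⟩ := AddSubmonoid.mem_closure_singleton.mp hz
      have y_nonneg : 0 ≤ y :=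
        (AddSubmonoid.closure_le (S := AddSubmonoid.nonneg G)).mpr nonneg_D hy
      refine ⟨n, Set.mem_Iic.mpr (le_of_not_gt fun hn ↦ ?_), y, ⟨hy, ?_⟩, rfl⟩
      · refine absurd (nsmul_lt_nsmul_left d_pos hn) (not_lt_of_ge ?_)
        exact (le_add_of_nonneg_right y_nonneg).trans (x_le.trans hN)
      · exact (le_add_of_nonneg_left (nsmul_nonneg d_pos.le n)).trans x_le

lemma finite_Ici_of_sub_mem_closure {G : Type*} [AddCommGroup G] [LinearOrder G]
    [IsOrderedAddMonoid G] [Archimedean G] {A D : Set G} (hA : A.Finite) (hD : D.Finite)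
    (nonneg : ∀ d ∈ D, 0 ≤ d) (C : G) :
    {x | C ≤ x ∧ ∃ a ∈ A, a - x ∈ AddSubmonoid.closure D}.Finite := by
  refine (hA.biUnion fun a _ ↦
    (finite_closure_le hD nonneg (a - C)).image fun d ↦ a - d).subset ?_
  rintro x ⟨hx, a, ha, mem⟩
  exact Set.mem_biUnion ha ⟨a - x, ⟨mem, sub_le_sub_left hx a⟩, sub_sub_cancel a x⟩

/-- The field generated by the entries of the Gram matrix of the simple roots; it contains every
value of the form on roots. -/
noncomputable def coxeterField (M : CoxeterMatrix B) : IntermediateField ℚ ℝ :=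
  IntermediateField.adjoin ℚ (Set.range fun p : B × B ↦ coxeterCoeff M p.1 p.2)

lemma coxeterCoeff_mem_coxeterField (i j : B) : coxeterCoeff M i j ∈ coxeterField M :=
  IntermediateField.subset_adjoin ℚ _ ⟨(i, j), rfl⟩

lemma isIntegral_coxeterCoeff (i j : B) : IsIntegral ℤ (coxeterCoeff M i j) := by
  have := (Real.isIntegral_two_mul_cos_rat_mul_pi (1 / M i j)).neg
  rwa [Rat.cast_div, Rat.cast_one, Rat.cast_natCast, one_div_mul_eq_div] at this

lemma finiteDimensional_coxeterField [Finite B] (M : CoxeterMatrix B) :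
    FiniteDimensional ℚ (coxeterField M) := by
  refine IntermediateField.finiteDimensional_adjoin ?_
  rintro _ ⟨p, rfl⟩
  exact (isIntegral_coxeterCoeff p.1 p.2).tower_top

lemma coxeterForm_root_simpleRoot_mem_coxeterField (cs : CoxeterSystem M W) (g : W) (i j : B) :
    coxeterForm M (geomRep cs g (simpleRoot i)) (simpleRoot j) ∈ coxeterField M := by
  induction g using cs.simple_induction_left generalizing j with
  | one => simpa [coxeterForm_simpleRoot] using coxeterCoeff_mem_coxeterField i j
  | mul_simple_left g k ih =>
    rw [geomRep_mul_apply, geomRep_simple_apply, map_sub, map_smul, LinearMap.sub_apply,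
      LinearMap.smul_apply, coxeterForm_simpleRoot, isSymm_coxeterForm.eq (simpleRoot k)]
    exact sub_mem (ih j) (mul_mem (ih k) (coxeterCoeff_mem_coxeterField k j))

/-- The numbers which may occur as the value of the form on two non-proportional roots whose
reflections generate a finite group. -/
def dihedralValues (M : CoxeterMatrix B) : Set ℝ :=
  {x | x ∈ coxeterField M ∧ ∃ n : ℕ, (S ℝ n).eval x = 0}

lemma finite_dihedralValues [Finite B] (M : CoxeterMatrix B) : (dihedralValues M).Finite := by
  have := finiteDimensional_coxeterField M
  have : NumberField (coxeterField M) := ⟨⟩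
  refine ((finite_roots_chebyshevS (coxeterField M)).image Subtype.val).subset ?_
  rintro x ⟨hx, n, hn⟩
  refine ⟨⟨x, hx⟩, ⟨n, Subtype.val_injective ?_⟩, rfl⟩
  rw [ZeroMemClass.coe_zero, ← hn, ← map_S (algebraMap (coxeterField M) ℝ), Polynomial.eval_map]
  exact (Polynomial.eval₂_at_apply (algebraMap (coxeterField M) ℝ) ⟨x, hx⟩).symm

lemma neg_mem_dihedralValues {x : ℝ} (h : x ∈ dihedralValues M) : -x ∈ dihedralValues M := by
  obtain ⟨hx, n, hn⟩ := h
  exact ⟨neg_mem hx, n, by rw [chebyshevS_eval_neg, hn, mul_zero]⟩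

lemma neg_two_le_of_mem_dihedralValues {x : ℝ} (h : x ∈ dihedralValues M) : -2 ≤ x := by
  obtain ⟨-, n, hn⟩ := h
  exact (abs_le.mp (norm_le_two_of_chebyshevS_eval_eq_zero hn)).1

/-- The nonnegative amounts by which the value of the form on the root of a base and a simple root
can drop when the base is extended by one letter. -/
def formDrops (M : CoxeterMatrix B) : Set ℝ :=
  {d | 0 ≤ d ∧ ∃ x ∈ dihedralValues M, ∃ i j, d = x * coxeterCoeff M i j}

lemma finite_formDrops [Finite B] (M : CoxeterMatrix B) : (formDrops M).Finite := by
  refine ((finite_dihedralValues M).image2 (· * ·)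
    (Set.finite_range fun p : B × B ↦ coxeterCoeff M p.1 p.2)).subset ?_
  rintro d ⟨-, x, hx, i, j, rfl⟩
  exact ⟨x, hx, _, ⟨(i, j), rfl⟩, rfl⟩

end FormValues

section Bases

open Polynomial.Chebyshev

variable {cs : CoxeterSystem M W} {s t : B} {v w : W} {ω : List B}

lemma form_root_simpleRoot_neg {g : W} {i : B} (nonneg : 0 ≤ geomRep cs g (simpleRoot i))
    (length_lt : cs.length (g * cs.simple i * g⁻¹) <
      cs.length (cs.simple t * (g * cs.simple i * g⁻¹) * cs.simple t)) :
    coxeterForm M (geomRep cs g (simpleRoot i)) (simpleRoot t) < 0 := by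
  set r := g * cs.simple i * g⁻¹ with r_def
  have r_ne : r ≠ cs.simple t := by
    rintro eq
    simp [eq] at length_lt
  have root_ne : geomRep cs g (simpleRoot i) ≠ simpleRoot t := fun eq ↦ r_ne <| by
    simpa using conj_simple_eq_of_root_eq cs (h := 1) (eq.trans (by simp))
  have not_descent : ¬cs.IsRightDescent r t := fun descent ↦ by
    have := cs.isRightDescent_iff.mp descent
    have := cs.length_mul_le (cs.simple t) (r * cs.simple t)
    rw [cs.length_simple, ← mul_assoc] at this
    lia
  have image_eq := LinearEquiv.congr_fun (geomRep_conj_simple cs g i) (simpleRoot t)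
  rw [← r_def, Module.reflection_apply] at image_eq
  by_contra! form_nonneg
  obtain form_eq | form_pos := form_nonneg.eq_or_lt
  · rw [← form_eq, zero_smul, sub_zero] at image_eq
    have commute := conj_simple_eq_of_root_eq cs (h := 1) (j := t) (image_eq.trans (by simp))
    rw [one_mul, inv_one, mul_one, mul_inv_eq_iff_eq_mul] at commute
    rw [← commute, cs.simple_mul_simple_cancel_right] at length_lt
    exact length_lt.false
  · refine root_ne (eq_simpleRoot_of_forall_ne nonneg (coxeterForm_root_self cs g i) fun l hl ↦ ?_)
    have image_nonneg := geomRep_simpleRoot_nonneg cs not_descent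
    rw [image_eq] at image_nonneg
    have coordinate := image_nonneg l
    simp only [simpleRoot, Finsupp.coe_zero, Pi.zero_apply, Finsupp.coe_sub,
      Pi.sub_apply, Finsupp.single_eq_of_ne hl, Finsupp.smul_apply, smul_eq_mul, zero_sub,
      neg_nonneg] at coordinate
    exact le_antisymm (nonpos_of_mul_nonpos_right coordinate form_pos) (nonneg l)

lemma geomRep_wordProd_eq_self {x : B →₀ ℝ}
    (orthogonal : ∀ t ∈ ω, coxeterForm M (simpleRoot t) x = 0) :
    geomRep cs (cs.wordProd ω) x = x := by
  induction ω with
  | nil => simp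
  | cons t ω ih =>
    rw [List.forall_mem_cons] at orthogonal
    rw [cs.wordProd_cons, geomRep_mul_apply, ih orthogonal.2, geomRep_simple_apply, orthogonal.1,
      zero_smul, sub_zero]

lemma IsBase.left_factor (base : IsBase cs s (v * w))
    (length_eq : cs.length (v * w) = cs.length v + cs.length w) : IsBase cs s v := by
  refine ⟨le_antisymm ?_ ?_, fun t ht length_lt ↦ base.2 t ht ?_⟩
  · have := cs.length_mul_le (v⁻¹ * cs.simple s) v
    have := cs.length_mul_le v⁻¹ (cs.simple s)
    rw [cs.length_inv, cs.length_simple] at this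
    lia
  · have length_base := base.1
    have := cs.length_mul_le (w⁻¹ * (v⁻¹ * cs.simple s * v)) w
    have := cs.length_mul_le w⁻¹ (v⁻¹ * cs.simple s * v)
    rw [cs.length_inv] at this
    simp only [mul_inv_rev, mul_assoc] at *
    lia
  · have := cs.length_mul_le (t * v) w
    rw [← mul_assoc]
    lia

variable (cs s w) in
/-- The positive root whose reflection is the conjugate `w⁻¹ s w`, for a base `(s, w)`. -/
noncomputable def baseRoot : B →₀ ℝ := geomRep cs w⁻¹ (simpleRoot s)

lemma baseRoot_mul : baseRoot cs s (v * w) = geomRep cs w⁻¹ (baseRoot cs s v) := by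
  rw [baseRoot, mul_inv_rev, geomRep_mul_apply, baseRoot]

lemma geomRep_baseRoot : geomRep cs w (baseRoot cs s w) = simpleRoot s := by
  rw [baseRoot, ← geomRep_mul_apply, mul_inv_cancel, map_one, LinearEquiv.coe_one, id]

lemma coxeterForm_baseRoot_self : coxeterForm M (baseRoot cs s w) (baseRoot cs s w) = 2 :=
  coxeterForm_root_self cs w⁻¹ s

lemma coxeterForm_simpleRoot_geomRep (x : B →₀ ℝ) :
    coxeterForm M (simpleRoot s) (geomRep cs w x) = coxeterForm M (baseRoot cs s w) x := by
  rw [← coxeterForm_geomRep cs w (baseRoot cs s w), geomRep_baseRoot]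

lemma coxeterForm_baseRoot_mul_simple (b : B) :
    coxeterForm M (baseRoot cs s (w * cs.simple t)) (simpleRoot b) =
      coxeterForm M (baseRoot cs s w) (simpleRoot b) -
        coxeterForm M (baseRoot cs s w) (simpleRoot t) * coxeterCoeff M t b := by
  rw [baseRoot_mul, cs.inv_simple, geomRep_simple_apply, map_sub, map_smul, LinearMap.sub_apply,
    LinearMap.smul_apply, coxeterForm_simpleRoot, isSymm_coxeterForm.eq (simpleRoot t), smul_eq_mul]

lemma IsBase.baseRoot_nonneg (base : IsBase cs s w) : 0 ≤ baseRoot cs s w := by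
  refine geomRep_simpleRoot_nonneg cs fun descent ↦ ?_
  have length_base := base.1
  have := cs.length_mul_le (w⁻¹ * cs.simple s) w
  have := cs.isRightDescent_iff.mp descent
  rw [cs.length_inv] at this
  lia

lemma IsBase.form_baseRoot_neg (base : IsBase cs s (w * cs.simple t))
    (length_eq : cs.length (w * cs.simple t) = cs.length w + 1) :
    coxeterForm M (baseRoot cs s w) (simpleRoot t) < 0 := by
  have base_left : IsBase cs s w := base.left_factor (by rwa [cs.length_simple])
  refine form_root_simpleRoot_neg base_left.baseRoot_nonneg ?_
  have length_left := base_left.1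
  have length_conj := base.1
  simp only [mul_inv_rev, cs.inv_simple, inv_inv, mul_assoc] at *
  lia

lemma IsBase.form_baseRoot_mem_dihedralValues (base : IsBase cs s (w * cs.simple t))
    (length_eq : cs.length (w * cs.simple t) = cs.length w + 1) :
    coxeterForm M (baseRoot cs s w) (simpleRoot t) ∈ dihedralValues M := by
  have base_left : IsBase cs s w := base.left_factor (by rwa [cs.length_simple])
  have form_neg := base.form_baseRoot_neg length_eq
  refine ⟨coxeterForm_root_simpleRoot_mem_coxeterField cs w⁻¹ s t, ?_⟩
  have finite := base.2 (w * cs.simple t * w⁻¹) ⟨w, t, rfl⟩ (by simp [length_eq])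
  have form_eq := coxeterForm_simpleRoot_geomRep (cs := cs) (s := s) (w := w) (simpleRoot t)
  have := exists_chebyshevS_eval_form_eq_zero cs (g := 1) (i := s) (h := w) (j := t)
    (by simpa using finite)
  simp only [map_one, LinearEquiv.coe_one, id, form_eq] at this
  refine this (fun eq ↦ ?_) fun eq ↦ ?_
  · rw [← form_eq, ← eq, coxeterForm_simpleRoot_self] at form_neg
    norm_num at form_neg
  · have root_eq : baseRoot cs s w = -simpleRoot t := by
      rw [baseRoot, eq, map_neg, geomRep_inv_apply_geomRep]
    have nonneg := base_left.baseRoot_nonneg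
    rw [root_eq, neg_nonneg] at nonneg
    exact not_simpleRoot_nonpos t nonneg

lemma IsBase.exists_sub_form_mem_closure (base : IsBase cs s w) (b : B) :
    ∃ a ∈ Set.range (coxeterCoeff M s) ∪ dihedralValues M,
      a - coxeterForm M (baseRoot cs s w) (simpleRoot b) ∈ AddSubmonoid.closure (formDrops M) := by
  induction hn : cs.length w generalizing w b with
  | zero =>
    refine ⟨coxeterCoeff M s b, .inl ⟨b, rfl⟩, ?_⟩
    rw [cs.length_eq_zero_iff.mp hn, baseRoot, inv_one, map_one, LinearEquiv.coe_one, id,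
      coxeterForm_simpleRoot, sub_self]
    exact zero_mem _
  | succ n ih =>
    obtain ⟨t, ht⟩ := cs.exists_rightDescent_of_ne_one (w := w) (by rintro rfl; simp at hn)
    have length_eq := cs.isRightDescent_iff.mp ht
    obtain ⟨v, rfl⟩ : ∃ v, w = v * cs.simple t := ⟨w * cs.simple t, by simp⟩
    rw [cs.simple_mul_simple_cancel_right] at length_eq
    have form_mem := base.form_baseRoot_mem_dihedralValues length_eq.symm
    have form_neg := base.form_baseRoot_neg length_eq.symm
    rw [coxeterForm_baseRoot_mul_simple]
    obtain rfl | hb := eq_or_ne b t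
    · refine ⟨_, .inr (neg_mem_dihedralValues form_mem), ?_⟩
      rw [coxeterCoeff_self]
      ring_nf
      exact zero_mem _
    · obtain ⟨a, ha, mem⟩ := ih (base.left_factor (by rw [cs.length_simple, length_eq])) b (by lia)
      refine ⟨a, ha, ?_⟩
      rw [← sub_add]
      refine add_mem mem (AddSubmonoid.subset_closure ⟨?_, _, form_mem, t, b, rfl⟩)
      exact mul_nonneg_of_nonpos_of_nonpos form_neg.le (coxeterCoeff_nonpos hb.symm)

variable (cs s w) in
/-- The truncated values of the form on the root of `(s, w)` and the simple roots. Values below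
`-2` cannot occur at a letter by which the base is yet to be extended, so truncating at `-3` loses
nothing about these letters. -/
noncomputable def baseState (b : B) : ℝ :=
  max (coxeterForm M (baseRoot cs s w) (simpleRoot b)) (-3)

variable (cs) in
lemma finite_baseStates [Finite B] : {x | ∃ s w, IsBase cs s w ∧ baseState cs s w = x}.Finite := by
  let initial : Set ℝ := (Set.range fun p : B × B ↦ coxeterCoeff M p.1 p.2) ∪ dihedralValues M
  let values : Set ℝ := {x | -3 ≤ x ∧ ∃ a ∈ initial, a - x ∈ AddSubmonoid.closure (formDrops M)}
  have finite_values : values.Finite :=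
    finite_Ici_of_sub_mem_closure ((Set.finite_range _).union (finite_dihedralValues M))
      (finite_formDrops M) (fun _ h ↦ h.1) (-3)
  refine (Set.Finite.pi' fun _ : B ↦ finite_values.insert (-3)).subset ?_
  rintro _ ⟨s, w, base, rfl⟩ b
  obtain le | lt := le_or_gt (coxeterForm M (baseRoot cs s w) (simpleRoot b)) (-3)
  · exact .inl (max_eq_right le)
  · obtain ⟨a, ha, mem⟩ := base.exists_sub_form_mem_closure b
    rw [baseState, max_eq_left lt.le]
    refine .inr ⟨lt.le, a, ha.imp_left ?_, mem⟩
    rintro ⟨c, rfl⟩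
    exact ⟨(s, c), rfl⟩

lemma IsBase.geomRep_root_nonneg (base : IsBase cs s w) {g : W} {i : B}
    (nonneg : 0 ≤ geomRep cs g (simpleRoot i))
    (form_eq : coxeterForm M (baseRoot cs s w) (geomRep cs g (simpleRoot i)) = 2) :
    0 ≤ geomRep cs w (geomRep cs g (simpleRoot i)) := by
  rw [← coxeterForm_simpleRoot_geomRep] at form_eq
  rw [← geomRep_mul_apply] at form_eq ⊢
  by_contra neg
  have inversion := isRightInversion_of_not_root_nonneg cs nonneg neg
  have finite := base.2 (w * g * cs.simple i * (w * g)⁻¹) ⟨_, i, rfl⟩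
    (by simpa [mul_assoc] using inversion.2)
  have exists_root := exists_chebyshevS_eval_form_eq_zero cs (g := 1) (i := s) (h := w * g) (j := i)
    (by simpa using finite)
  simp only [map_one, LinearEquiv.coe_one, id, form_eq] at exists_root
  obtain ⟨n, hn⟩ := exists_root (fun eq ↦ neg (eq ▸ simpleRoot_nonneg s)) fun eq ↦ by
    rw [eq, map_neg, LinearMap.neg_apply, coxeterForm_root_self] at form_eq
    norm_num at form_eq
  rw [S_eval_two] at hn
  exact absurd hn (by positivity)

lemma IsBase.neg_two_le_form_baseRoot (base : IsBase cs s (w * cs.wordProd ω))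
    (length_eq : cs.length (w * cs.wordProd ω) = cs.length w + ω.length) (ht : t ∈ ω) :
    -2 ≤ coxeterForm M (baseRoot cs s w) (simpleRoot t) := by
  induction ω generalizing w with
  | nil => simp at ht
  | cons a ω ih =>
    rw [cs.wordProd_cons, ← mul_assoc] at base length_eq
    rw [List.length_cons] at length_eq
    have := cs.length_mul_le (w * cs.simple a) (cs.wordProd ω)
    have := cs.length_mul_le w (cs.simple a)
    have := cs.length_simple a
    have := cs.length_wordProd_le ω
    have base_left := base.left_factor (by lia)
    have length_left : cs.length (w * cs.simple a) = cs.length w + 1 := by lia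
    obtain rfl | hta := eq_or_ne t a
    · exact neg_two_le_of_mem_dihedralValues
        (base_left.form_baseRoot_mem_dihedralValues length_left)
    · have le := ih base (by lia) (List.mem_of_ne_of_mem hta ht)
      rw [coxeterForm_baseRoot_mul_simple] at le
      have drop_nonneg := mul_nonneg_of_nonpos_of_nonpos
        (base_left.form_baseRoot_neg length_left).le (coxeterCoeff_nonpos (M := M) hta.symm)
      linarith

lemma IsBase.length_eq_of_geomRep_baseRoot_add (base_v : IsBase cs s v) (base_w : IsBase cs s w)
    (form_eq : coxeterForm M (baseRoot cs s v) (baseRoot cs s w) = 2)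
    (add_eq : geomRep cs v (baseRoot cs s w) + geomRep cs w (baseRoot cs s v) =
      2 • simpleRoot s) :
    cs.length v = cs.length w := by
  have nonneg_v := base_v.geomRep_root_nonneg base_w.baseRoot_nonneg form_eq
  have nonneg_w := base_w.geomRep_root_nonneg base_v.baseRoot_nonneg
    ((isSymm_coxeterForm.eq _ _).trans form_eq)
  have root_eq : geomRep cs v (baseRoot cs s w) = simpleRoot s := by
    refine eq_simpleRoot_of_forall_ne (M := M) nonneg_v ?_ fun l hl ↦ ?_
    · rw [coxeterForm_geomRep, coxeterForm_baseRoot_self]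
    · have coordinate := DFunLike.congr_fun add_eq l
      simp only [simpleRoot, Finsupp.coe_add, Pi.add_apply, Finsupp.smul_apply,
        Finsupp.single_eq_of_ne hl, smul_zero] at coordinate
      exact (add_eq_zero_iff_of_nonneg (nonneg_v l) (nonneg_w l)).mp coordinate |>.1
  have conj_eq := conj_simple_eq_of_root_eq cs (g := w⁻¹) (h := v⁻¹) (i := s) (j := s)
    (by rw [← root_eq, geomRep_inv_apply_geomRep, root_eq, baseRoot])
  have length_v := base_v.1
  have length_w := base_w.1
  rw [inv_inv, inv_inv] at conj_eq
  rw [conj_eq] at length_w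
  lia

lemma IsBase.eq_nil_of_baseState_eq (base : IsBase cs s (w * cs.wordProd ω))
    (length_eq : cs.length (w * cs.wordProd ω) = cs.length w + ω.length)
    (state_eq : baseState cs s (w * cs.wordProd ω) = baseState cs s w) : ω = [] := by
  have base_left : IsBase cs s w := base.left_factor <| by
    have := cs.length_mul_le w (cs.wordProd ω)
    have := cs.length_wordProd_le ω
    lia
  set u := cs.wordProd ω
  obtain ⟨γ, γ_eq⟩ : ∃ γ, γ = baseRoot cs s (w * u) - baseRoot cs s w := ⟨_, rfl⟩
  have orthogonal : ∀ t ∈ ω, coxeterForm M (simpleRoot t) γ = 0 := by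
    intro t ht
    have lower_bound := base.neg_two_le_form_baseRoot length_eq ht
    have truncated_eq := congrFun state_eq t
    rw [baseState, baseState] at truncated_eq
    rw [isSymm_coxeterForm.eq, γ_eq, map_sub, LinearMap.sub_apply]
    grind
  have fixed : geomRep cs u γ = γ := geomRep_wordProd_eq_self orthogonal
  have image_root : geomRep cs u (baseRoot cs s (w * u)) = baseRoot cs s w := by
    rw [baseRoot_mul, ← geomRep_mul_apply, mul_inv_cancel, map_one, LinearEquiv.coe_one, id]
  have form_eq : coxeterForm M (baseRoot cs s w) (baseRoot cs s (w * u)) = 2 := by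
    have invariance := coxeterForm_geomRep cs u γ (baseRoot cs s (w * u))
    have symm := (isSymm_coxeterForm (M := M)).eq (baseRoot cs s w) (baseRoot cs s (w * u))
    rw [fixed, image_root] at invariance
    simp only [γ_eq, map_sub, LinearMap.sub_apply, coxeterForm_baseRoot_self] at invariance
    linarith
  have image_root_left : geomRep cs u (baseRoot cs s w) = baseRoot cs s w - γ := by
    have root_eq : baseRoot cs s w = baseRoot cs s (w * u) - γ := by rw [γ_eq, sub_sub_cancel]
    calc geomRep cs u (baseRoot cs s w)
        = geomRep cs u (baseRoot cs s (w * u)) - geomRep cs u γ := by rw [← map_sub, ← root_eq]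
      _ = baseRoot cs s w - γ := by rw [image_root, fixed]
  have add_eq : geomRep cs w (baseRoot cs s (w * u)) + geomRep cs (w * u) (baseRoot cs s w) =
      2 • simpleRoot s := by
    rw [geomRep_mul_apply, image_root_left, γ_eq, map_sub, map_sub, geomRep_baseRoot]
    module
  have := base_left.length_eq_of_geomRep_baseRoot_add base form_eq add_eq
  exact List.length_eq_zero_iff.mp (by lia)

lemma IsBase.wordProd_take (base : IsBase cs s (cs.wordProd ω)) (reduced : cs.IsReduced ω)
    (k : ℕ) : IsBase cs s (cs.wordProd (ω.take k)) := by
  refine IsBase.left_factor (w := cs.wordProd (ω.drop k)) ?_ ?_ <;>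
    rw [← cs.wordProd_append, List.take_append_drop]
  · exact base
  · rw [reduced.eq, (reduced.take k).eq, (reduced.drop k).eq, ← List.length_append,
      List.take_append_drop]

lemma IsBase.injOn_baseState_take (base : IsBase cs s (cs.wordProd ω)) (reduced : cs.IsReduced ω) :
    Set.InjOn (fun k ↦ baseState cs s (cs.wordProd (ω.take k))) (Set.Iio ω.length) := by
  intro j hj k hk state_eq
  wlog hjk : j ≤ k generalizing j k
  · exact (this hk hj state_eq.symm (le_of_not_ge hjk)).symm
  have factor : cs.wordProd (ω.take k) =
      cs.wordProd (ω.take j) * cs.wordProd ((ω.take k).drop j) := by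
    have take_take : (ω.take k).take j = ω.take j := by rw [List.take_take, min_eq_left hjk]
    rw [← cs.wordProd_append, ← take_take, List.take_append_drop]
  have length_eq : (ω.take k).length = (ω.take j).length + ((ω.take k).drop j).length := by
    grind
  rw [Set.mem_Iio] at hj hk
  have base_take := base.wordProd_take reduced k
  rw [← (reduced.take k).eq, ← (reduced.take j).eq, factor] at length_eq
  rw [factor] at base_take
  have nil := base_take.eq_nil_of_baseState_eq length_eq (factor ▸ state_eq.symm)
  grind

end Bases

/-- For a Coxeter system with finite index set, the length of the second
component of any base is uniformly bounded. -/
theorem base_length_bounded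
    [Finite B] (cs : CoxeterSystem M W) :
    ∃ N : ℕ, ∀ (s : B) (w : W), IsBase cs s w → cs.length w ≤ N := by
  refine ⟨{x | ∃ s w, IsBase cs s w ∧ baseState cs s w = x}.ncard, fun s w base ↦ ?_⟩
  obtain ⟨ω, reduced, rfl⟩ := cs.exists_isReduced w
  rw [reduced.eq, ← Set.ncard_Iio_nat ω.length]
  exact Set.ncard_le_ncard_of_injOn _ (fun k _ ↦ ⟨s, _, base.wordProd_take reduced k, rfl⟩)
    (base.injOn_baseState_take reduced) (finite_baseStates cs)
end

section
/- Let (W,S) be a Coxeter system with S finite and let (s,w) be a base with support J. Then the shadow of (s,w), namely the set of j ∈ J with ℓ((wj)⁻¹s(wj)) ≤ ℓ(w⁻¹sw), generates a finite subgroup of W. -/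
variable {B : Type*} {W : Type*} [Group W] {M : CoxeterMatrix B}

/-!
Let `β = w⁻¹ αₛ` be the root of the reflection `w⁻¹ s w` in the geometric representation. The
length hypothesis makes `β` positive, and `ℓ((wj)⁻¹ s (wj)) ≤ ℓ(w⁻¹ s w)` forces `⟨β, αⱼ⟩ ≥ 0`.
Along a reduced word of `w`, each letter `j` pairs negatively with the root reached so far, so it
increases the `j`-coordinate and is joined to the previous support in the Coxeter graph. Hence the
support of `β` is connected and contains `J`.

For `x = ∑ yᵢ βᵢ αᵢ`, Vinberg's identity
`⟨x, x⟩ = ∑ yᵢ² βᵢ ⟨αᵢ, β⟩ - ½ ∑ ⟨αᵢ, αⱼ⟩ βᵢ βⱼ (yᵢ - yⱼ)²`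
has nonnegative summands when `x` is supported in the shadow. If they all vanish, then `y` is
constant by connectedness, contradicting `⟨β, β⟩ = 1` unless `x = 0`. So the form is positive
definite on the span of the shadow, and a Coxeter group with positive definite form is finite:
with `p` defined by `⟨p, αᵢ⟩ = 1` for all `i`, lengths are at most `⟨p, p⟩`.
-/

noncomputable section

namespace CoxeterGeometry

open Finsupp CoxeterSystem Polynomial.Chebyshev
open scoped Matrix

section CosineForm

/-- The cosine matrix `-cos (π / mᵢⱼ)` of a Coxeter matrix. Infinite order is encoded as `mᵢⱼ = 0`,
where `π / 0 = 0` gives the customary entry `-1`. -/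
def cosMatrix (M : CoxeterMatrix B) : Matrix B B ℝ :=
  Matrix.of fun i j ↦ -Real.cos (Real.pi / M i j)

theorem cosMatrix_apply (i j : B) : cosMatrix M i j = -Real.cos (Real.pi / M i j) := rfl

@[simp]
theorem cosMatrix_self (i : B) : cosMatrix M i i = 1 := by
  simp [cosMatrix_apply]

theorem cosMatrix_comm (i j : B) : cosMatrix M i j = cosMatrix M j i := by
  simp [cosMatrix_apply, M.symmetric i j]

theorem cosMatrix_le_one (i j : B) : cosMatrix M i j ≤ 1 :=
  neg_le.mpr (Real.neg_one_le_cos _)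

theorem two_le_coxeterMatrix_apply {i j : B} (hij : i ≠ j) (hM : M i j ≠ 0) : 2 ≤ M i j := by
  have := M.off_diagonal i j hij
  lia

theorem cosMatrix_nonpos {i j : B} (hij : i ≠ j) : cosMatrix M i j ≤ 0 := by
  rw [cosMatrix_apply, neg_nonpos]
  rcases eq_or_ne (M i j) 0 with hM | hM
  · simp [hM]
  · have h2 : (2 : ℝ) ≤ M i j := mod_cast two_le_coxeterMatrix_apply hij hM
    have hpos : 0 ≤ Real.pi / M i j := by positivity
    exact Real.cos_nonneg_of_neg_pi_div_two_le_of_le (by linarith [Real.pi_pos])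
      (div_le_div_of_nonneg_left Real.pi_pos.le two_pos h2)

/-- The simple root `αᵢ`, a basis vector of the space of the geometric representation. -/
abbrev simpleRoot (i : B) : B →₀ ℝ := single i 1

variable (M) in
/-- The canonical symmetric bilinear form of a Coxeter matrix, with `⟨αᵢ, αⱼ⟩ = -cos (π / mᵢⱼ)`. -/
def cosForm : LinearMap.BilinForm ℝ (B →₀ ℝ) :=
  linearCombination ℝ fun i ↦ linearCombination ℝ (cosMatrix M i)

theorem cosForm_apply (x y : B →₀ ℝ) :
    cosForm M x y = x.sum fun i a ↦ y.sum fun j b ↦ a * (cosMatrix M i j * b) := by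
  simp [cosForm, linearCombination_apply, Finsupp.sum, LinearMap.sum_apply, Finset.mul_sum,
    mul_comm]

@[simp]
theorem cosForm_simpleRoot (i j : B) :
    cosForm M (simpleRoot i) (simpleRoot j) = cosMatrix M i j := by
  simp [cosForm]

theorem cosForm_comm (x y : B →₀ ℝ) : cosForm M x y = cosForm M y x := by
  have h : cosForm M = (cosForm M).flip := by
    ext i j
    simpa using cosMatrix_comm i j
  exact DFunLike.congr_fun (DFunLike.congr_fun h x) y

theorem cosForm_eq_sum_mul_left (x y : B →₀ ℝ) :
    cosForm M x y = x.sum fun i a ↦ a * cosForm M (simpleRoot i) y := by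
  simp [cosForm, linearCombination_apply, Finsupp.sum, LinearMap.sum_apply]

end CosineForm

section Representation

variable (M) in
/-- The simple reflection `x ↦ x - 2 ⟨αᵢ, x⟩ αᵢ`. -/
def simpleReflection (i : B) : (B →₀ ℝ) ≃ₗ[ℝ] (B →₀ ℝ) :=
  Module.reflection (x := simpleRoot i) (f := (2 : ℝ) • cosForm M (simpleRoot i)) (by simp)

theorem simpleReflection_apply (i : B) (x : B →₀ ℝ) :
    simpleReflection M i x = x - (2 * cosForm M (simpleRoot i) x) • simpleRoot i := by
  simp [simpleReflection, Module.reflection_apply]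

theorem sin_two_mul_pi_div_ne_zero {m : ℕ} (hm : 2 < m) : Real.sin (2 * (Real.pi / m)) ≠ 0 := by
  have hm' : (2 : ℝ) < m := mod_cast hm
  have hlt : 2 * (Real.pi / m) < Real.pi := by
    rw [← mul_div_assoc, div_lt_iff₀ (by positivity)]
    nlinarith [Real.pi_pos]
  exact (Real.sin_pos_of_pos_of_lt_pi (by positivity) hlt).ne'

theorem chebyshevS_eval_eq_zero_of_even {θ : ℝ} {k : ℕ} (hθ : Real.sin (2 * θ) ≠ 0)
    (hk : 2 * k * θ = Real.pi) : (S ℝ (k - 1)).eval (2 * Real.cos (2 * θ)) = 0 := by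
  have h := S_two_mul_real_cos (2 * θ) (k - 1)
  rw [show (((k : ℤ) - 1 : ℤ) + 1 : ℝ) * (2 * θ) = Real.pi by rw [← hk]; push_cast; ring,
    Real.sin_pi] at h
  exact (mul_eq_zero.mp h).resolve_right hθ

theorem chebyshevS_eval_add_eq_zero_of_odd {θ : ℝ} {k : ℕ} (hθ : Real.sin (2 * θ) ≠ 0)
    (hk : (2 * k + 1) * θ = Real.pi) :
    (S ℝ k).eval (2 * Real.cos (2 * θ)) + (S ℝ (k - 1)).eval (2 * Real.cos (2 * θ)) = 0 := by
  have h := S_two_mul_real_cos (2 * θ) k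
  have h' := S_two_mul_real_cos (2 * θ) (k - 1)
  rw [show (((k : ℤ) : ℝ) + 1) * (2 * θ) = θ + Real.pi by rw [← hk]; push_cast; ring,
    Real.sin_add_pi] at h
  rw [show (((k : ℤ) - 1 : ℤ) + 1 : ℝ) * (2 * θ) = Real.pi - θ by rw [← hk]; push_cast; ring,
    Real.sin_pi_sub] at h'
  refine (mul_eq_zero.mp ?_).resolve_right hθ
  rw [add_mul, h, h', neg_add_cancel]

theorem isLiftable_simpleReflection : M.IsLiftable (simpleReflection M) := by
  intro i j
  rcases eq_or_ne i j with rfl | hij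
  · rw [M.diagonal, pow_one, mul_eq_one_iff_eq_inv, simpleReflection, Module.reflection_inv]
  rcases eq_or_ne (M i j) 0 with hM | hM
  · rw [hM, pow_zero]
  set θ : ℝ := Real.pi / M i j with hθ
  have hmθ : M i j * θ = Real.pi := mul_div_cancel₀ _ (mod_cast hM)
  have ht : (2 : ℝ) * cosMatrix M i j * (2 * cosMatrix M i j) - 2 = 2 * Real.cos (2 * θ) := by
    rw [Real.cos_two_mul, cosMatrix_apply]
    ring
  ext1 z
  -- Powers of a product of two reflections expand in Chebyshev polynomials, here of `2 cos (2 θ)`.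
  rw [simpleReflection, simpleReflection, Module.reflection_mul_reflection_pow_apply]
  simp only [LinearMap.smul_apply, cosForm_simpleRoot, smul_eq_mul, cosMatrix_comm j i, ht,
    LinearEquiv.coe_one, id_eq]
  rcases (two_le_coxeterMatrix_apply hij hM).eq_or_lt with h2 | h3
  · have hcos : cosMatrix M i j = 0 := by simp [cosMatrix_apply, ← h2]
    have hcos2 : Real.cos (2 * θ) = -1 := by simp [hθ, ← h2, mul_div_cancel₀]
    rw [hcos, hcos2, ← h2]
    simp only [Nat.cast_ofNat, Int.reduceSub, Int.reduceDiv, S_zero, S_one, S_neg_one,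
      Polynomial.eval_zero, Polynomial.eval_one, Polynomial.eval_X]
    module
  have hsin : Real.sin (2 * θ) ≠ 0 := sin_two_mul_pi_div_ne_zero h3
  rcases Nat.even_or_odd' (M i j) with ⟨k, hk | hk⟩
  · have hS := chebyshevS_eval_eq_zero_of_even (k := k) hsin (by rw [← hmθ, hk]; push_cast; ring)
    rw [show ((M i j : ℤ) - 2) / 2 = k - 1 by lia, show ((M i j : ℤ) - 1) / 2 = k - 1 by lia, hS]
    simp
  · have hS := chebyshevS_eval_add_eq_zero_of_odd (k := k) hsin
      (by rw [← hmθ, hk]; push_cast; ring)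
    rw [show ((M i j : ℤ) - 2) / 2 = k - 1 by lia, show ((M i j : ℤ) - 1) / 2 = k by lia,
      show ((M i j : ℤ) - 3) / 2 = k - 1 by lia, show (M i j : ℤ) / 2 = k by lia, hS]
    simp

variable (cs : CoxeterSystem M W)

/-- The geometric representation of a Coxeter group, on the space spanned by the simple roots. -/
def geomRep : W →* ((B →₀ ℝ) ≃ₗ[ℝ] (B →₀ ℝ)) :=
  cs.lift ⟨simpleReflection M, isLiftable_simpleReflection⟩

theorem geomRep_simple_apply (i : B) (x : B →₀ ℝ) :
    geomRep cs (cs.simple i) x = x - (2 * cosForm M (simpleRoot i) x) • simpleRoot i := by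
  rw [geomRep, cs.lift_apply_simple, simpleReflection_apply]

theorem geomRep_simple_simpleRoot (i : B) :
    geomRep cs (cs.simple i) (simpleRoot i) = -simpleRoot i := by
  rw [geomRep_simple_apply, cosForm_simpleRoot, cosMatrix_self]
  module

theorem geomRep_mul_apply (u v : W) (x : B →₀ ℝ) :
    geomRep cs (u * v) x = geomRep cs u (geomRep cs v x) := by
  rw [map_mul, LinearEquiv.mul_apply]

theorem geomRep_apply_inv_apply (w : W) (x : B →₀ ℝ) :
    geomRep cs w (geomRep cs w⁻¹ x) = x := by
  rw [← geomRep_mul_apply, mul_inv_cancel, map_one, LinearEquiv.coe_one, id_eq]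

theorem cosForm_geomRep (w : W) (x y : B →₀ ℝ) :
    cosForm M (geomRep cs w x) (geomRep cs w y) = cosForm M x y := by
  induction w using cs.simple_induction_left with
  | one => simp
  | mul_simple_left w i ih =>
    rw [← ih, geomRep_mul_apply, geomRep_mul_apply, geomRep_simple_apply, geomRep_simple_apply]
    simp only [map_sub, map_smul, LinearMap.sub_apply, LinearMap.smul_apply, smul_eq_mul,
      cosForm_simpleRoot, cosMatrix_self, cosForm_comm (geomRep cs w x) (simpleRoot i)]
    ring

end Representation

section Positivity

variable (cs : CoxeterSystem M W)

theorem chebyshevS_eval_cosMatrix_nonneg {i j : B} (hij : i ≠ j) {k : ℕ}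
    (hk : M i j = 0 ∨ k ≤ M i j) : 0 ≤ (S ℝ (k - 1)).eval (-2 * cosMatrix M i j) := by
  rw [cosMatrix_apply, neg_mul_neg]
  rcases eq_or_ne (M i j) 0 with hM | hM
  · simp [hM]
  have h2 : (2 : ℝ) ≤ M i j := mod_cast two_le_coxeterMatrix_apply hij hM
  have hkM : (k : ℝ) ≤ M i j := mod_cast hk.resolve_left hM
  set θ : ℝ := Real.pi / M i j
  have hmθ : M i j * θ = Real.pi := mul_div_cancel₀ _ (mod_cast hM)
  have hpos : 0 < θ := by positivity
  have hsin : 0 < Real.sin θ := Real.sin_pos_of_pos_of_lt_pi hpos (by nlinarith)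
  refine nonneg_of_mul_nonneg_left ?_ hsin
  rw [S_two_mul_real_cos]
  push_cast
  rw [sub_add_cancel]
  exact Real.sin_nonneg_of_nonneg_of_le_pi (by positivity) (by rw [← hmθ]; gcongr)

theorem geomRep_alternatingWord_simpleRoot (i j : B) (k : ℕ) :
    geomRep cs (cs.wordProd (alternatingWord i j k)) (simpleRoot i) =
      (S ℝ k).eval (-2 * cosMatrix M i j) • simpleRoot (if Even k then i else j) +
        (S ℝ (k - 1)).eval (-2 * cosMatrix M i j) • simpleRoot (if Even k then j else i) := by
  induction k with
  | zero => simp [alternatingWord]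
  | succ k ih =>
    rw [alternatingWord_succ', cs.wordProd_cons, geomRep_mul_apply, ih, geomRep_simple_apply,
      Nat.cast_succ, S_add_one]
    by_cases hk : Even k <;>
    · simp only [hk, Nat.even_add_one, if_true, if_false, not_true, not_false_iff, map_add,
        map_smul, cosForm_simpleRoot, cosMatrix_self, cosMatrix_comm j i, Polynomial.eval_sub,
        Polynomial.eval_mul, Polynomial.eval_X, smul_eq_mul, add_sub_cancel_right]
      module

theorem exists_nonneg_geomRep_alternatingWord_simpleRoot {i j : B} (hij : i ≠ j) {k : ℕ}
    (hk : M i j = 0 ∨ k < M i j) : ∃ a b : ℝ, 0 ≤ a ∧ 0 ≤ b ∧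
      geomRep cs (cs.wordProd (alternatingWord i j k)) (simpleRoot i) =
        a • simpleRoot i + b • simpleRoot j := by
  have ha := chebyshevS_eval_cosMatrix_nonneg hij (k := k + 1) hk
  have hb := chebyshevS_eval_cosMatrix_nonneg hij (k := k) (hk.imp_right le_of_lt)
  rw [Nat.cast_succ, add_sub_cancel_right] at ha
  rw [geomRep_alternatingWord_simpleRoot]
  split_ifs
  · exact ⟨_, _, ha, hb, rfl⟩
  · exact ⟨_, _, hb, ha, add_comm _ _⟩

theorem exists_maximal_alternatingWord_suffix (w : W) (i j : B) :
    ∃ v k, w = v * cs.wordProd (alternatingWord i j k) ∧ cs.length w = cs.length v + k ∧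
      ¬cs.IsRightDescent v (if Even k then j else i) := by
  classical
  let P k := ∃ v, w = v * cs.wordProd (alternatingWord i j k) ∧ cs.length w = cs.length v + k
  have hP : P (Nat.findGreatest P (cs.length w)) :=
    Nat.findGreatest_spec (Nat.zero_le _) ⟨w, by simp [alternatingWord]⟩
  set k := Nat.findGreatest P (cs.length w)
  obtain ⟨v, hw, hlen⟩ := hP
  refine ⟨v, k, hw, hlen, fun hdesc ↦ ?_⟩
  have hlen' := cs.isRightDescent_iff.mp hdesc
  have hP' : P (k + 1) :=
    ⟨v * cs.simple (if Even k then j else i),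
      by rw [alternatingWord_succ', cs.wordProd_cons, ← mul_assoc,
        cs.simple_mul_simple_cancel_right, hw], by lia⟩
  exact (Nat.le_findGreatest (by lia) hP').not_gt k.lt_succ_self

theorem exists_eq_mul_alternatingWord {w : W} {i : B} (hi : ¬cs.IsRightDescent w i) (j : B) :
    ∃ v k, w = v * cs.wordProd (alternatingWord i j k) ∧ cs.length w = cs.length v + k ∧
      ¬cs.IsRightDescent v i ∧ ¬cs.IsRightDescent v j := by
  obtain ⟨v, k, hw, hlen, hnext⟩ := exists_maximal_alternatingWord_suffix cs w i j
  have hprev : ¬cs.IsRightDescent v (if Even k then i else j) := by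
    cases k with
    | zero => simpa [hw, alternatingWord] using hi
    | succ k =>
      intro hdesc
      have hlen' := cs.isRightDescent_iff.mp hdesc
      have hletter : (if Even (k + 1) then i else j) = if Even k then j else i := by
        by_cases hk : Even k <;> simp [hk, Nat.even_add_one]
      rw [hletter] at hlen'
      rw [alternatingWord_succ', cs.wordProd_cons, ← mul_assoc] at hw
      have hle := cs.length_mul_le (v * cs.simple (if Even k then j else i))
        (cs.wordProd (alternatingWord i j k))
      have hle' := cs.length_wordProd_le (alternatingWord i j k)
      rw [length_alternatingWord] at hle'
      rw [← hw] at hle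
      lia
  refine ⟨v, k, hw, hlen, ?_⟩
  split_ifs at hnext hprev <;> exact ⟨‹_›, ‹_›⟩

theorem eq_zero_or_lt_of_not_isRightDescent {v w : W} {i j : B} {k : ℕ}
    (hw : w = v * cs.wordProd (alternatingWord i j k)) (hlen : cs.length w = cs.length v + k)
    (hi : ¬cs.IsRightDescent w i) : M i j = 0 ∨ k < M i j := by
  by_contra! hM
  rw [M.symmetric] at hM
  refine cs.not_isReduced_alternatingWord j i (m := k + 1) hM.1 (by lia) ?_
  have hwi : w * cs.simple i = v * cs.wordProd (alternatingWord j i (k + 1)) := by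
    rw [alternatingWord_succ, cs.wordProd_concat, hw, mul_assoc]
  have hle := cs.length_mul_le v (cs.wordProd (alternatingWord j i (k + 1)))
  have hle' := cs.length_wordProd_le (alternatingWord j i (k + 1))
  have hlen' := cs.not_isRightDescent_iff.mp hi
  rw [length_alternatingWord] at hle'
  rw [CoxeterSystem.IsReduced, length_alternatingWord]
  rw [← hwi] at hle
  lia

theorem geomRep_simpleRoot_nonneg {w : W} {i : B} (hi : ¬cs.IsRightDescent w i) :
    0 ≤ geomRep cs w (simpleRoot i) := by
  induction hn : cs.length w using Nat.strong_induction_on generalizing w i with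
  | _ n ih =>
    rcases eq_or_ne w 1 with rfl | hw
    · simp
    obtain ⟨j, hj⟩ := cs.exists_rightDescent_of_ne_one hw
    -- Removing the maximal alternating suffix in `i` and `j` leaves a shorter element with neither
    -- `i` nor `j` as a right descent, and that suffix acts in the plane of `αᵢ` and `αⱼ`.
    obtain ⟨v, k, hwv, hlen, hvi, hvj⟩ := exists_eq_mul_alternatingWord cs hi j
    have hk : k ≠ 0 := by
      rintro rfl
      exact hvj (by simpa [hwv, alternatingWord] using hj)
    have hij : i ≠ j := by
      rintro rfl
      exact hi hj
    obtain ⟨a, b, ha, hb, hab⟩ := exists_nonneg_geomRep_alternatingWord_simpleRoot cs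
      hij (eq_zero_or_lt_of_not_isRightDescent cs hwv hlen hi)
    rw [hwv, geomRep_mul_apply, hab, map_add, map_smul, map_smul]
    exact add_nonneg (smul_nonneg ha (ih _ (by lia) hvi rfl))
      (smul_nonneg hb (ih _ (by lia) hvj rfl))

theorem geomRep_simpleRoot_nonpos {w : W} {i : B} (hi : cs.IsRightDescent w i) :
    geomRep cs w (simpleRoot i) ≤ 0 := by
  have h := geomRep_simpleRoot_nonneg cs (cs.isRightDescent_iff_not_isRightDescent_mul.mp hi)
  rwa [geomRep_mul_apply, geomRep_simple_simpleRoot, map_neg, Left.nonneg_neg_iff] at h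

end Positivity

section ConjugateRoot

variable (cs : CoxeterSystem M W)

theorem induction_of_not_isRightDescent {P : W → Prop} (w : W) (one : P 1)
    (mul_simple : ∀ v j, ¬cs.IsRightDescent v j → P v → P (v * cs.simple j)) : P w := by
  induction hn : cs.length w generalizing w with
  | zero => rwa [cs.length_eq_zero_iff.mp hn]
  | succ n ih =>
    have hw : w ≠ 1 := by
      rintro rfl
      simp at hn
    obtain ⟨j, hj⟩ := cs.exists_rightDescent_of_ne_one hw
    have hlen := cs.isRightDescent_iff.mp hj
    rw [← cs.simple_mul_simple_cancel_right (w := w) j]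
    exact mul_simple _ j (cs.isRightDescent_iff_not_isRightDescent_mul.mp hj) (ih _ (by lia))

/-- The root `w⁻¹ αₛ` of the reflection `w⁻¹ s w`. -/
def conjRoot (s : B) (w : W) : B →₀ ℝ := geomRep cs w⁻¹ (simpleRoot s)

@[simp]
theorem conjRoot_one (s : B) : conjRoot cs s 1 = simpleRoot s := by
  simp [conjRoot]

@[simp]
theorem cosForm_conjRoot_self (s : B) (w : W) :
    cosForm M (conjRoot cs s w) (conjRoot cs s w) = 1 := by
  rw [conjRoot, cosForm_geomRep, cosForm_simpleRoot, cosMatrix_self]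

theorem conjRoot_mul_simple_eq_geomRep (s : B) (v : W) (j : B) :
    conjRoot cs s (v * cs.simple j) = geomRep cs (cs.simple j) (conjRoot cs s v) := by
  rw [conjRoot, mul_inv_rev, cs.inv_simple, geomRep_mul_apply, conjRoot]

theorem conjRoot_mul_simple (s : B) (v : W) (j : B) :
    conjRoot cs s (v * cs.simple j) =
      conjRoot cs s v - (2 * cosForm M (conjRoot cs s v) (simpleRoot j)) • simpleRoot j := by
  rw [conjRoot_mul_simple_eq_geomRep, geomRep_simple_apply, cosForm_comm]

theorem geomRep_conj_apply (s : B) (w : W) (x : B →₀ ℝ) :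
    geomRep cs (w⁻¹ * cs.simple s * w) x =
      x - (2 * cosForm M (conjRoot cs s w) x) • conjRoot cs s w := by
  have h : cosForm M (simpleRoot s) (geomRep cs w x) = cosForm M (conjRoot cs s w) x := by
    rw [← cosForm_geomRep cs w (conjRoot cs s w) x, conjRoot, geomRep_apply_inv_apply]
  rw [mul_assoc, geomRep_mul_apply, geomRep_mul_apply, geomRep_simple_apply, map_sub, map_smul,
    ← geomRep_mul_apply, inv_mul_cancel, map_one, h, conjRoot, LinearEquiv.coe_one, id_eq]

theorem geomRep_simple_mul_conj_simpleRoot (s : B) (w : W) (j : B) :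
    geomRep cs (cs.simple j * (w⁻¹ * cs.simple s * w)) (simpleRoot j) =
      -simpleRoot j -
        (2 * cosForm M (conjRoot cs s w) (simpleRoot j)) • conjRoot cs s (w * cs.simple j) := by
  rw [geomRep_mul_apply, geomRep_conj_apply, map_sub, map_smul, geomRep_simple_simpleRoot,
    conjRoot_mul_simple_eq_geomRep]

theorem conj_mul_simple (t w : W) (j : B) :
    (w * cs.simple j)⁻¹ * t * (w * cs.simple j) = cs.simple j * (w⁻¹ * t * w) * cs.simple j := by
  simp only [mul_inv_rev, cs.inv_simple, mul_assoc]

theorem conj_simple_inv (s : B) (w : W) :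
    (w⁻¹ * cs.simple s * w)⁻¹ = w⁻¹ * cs.simple s * w := by
  simp [mul_assoc]

variable {cs} {s j : B} {w : W}

theorem not_isRightDescent_conj (hβ : 0 ≤ conjRoot cs s w)
    (hneg : cosForm M (conjRoot cs s w) (simpleRoot j) < 0) :
    ¬cs.IsRightDescent (w⁻¹ * cs.simple s * w) j := by
  intro hdesc
  have h := geomRep_simpleRoot_nonpos cs hdesc j
  have hβj := hβ j
  simp only [geomRep_conj_apply, coe_sub, coe_smul, Pi.sub_apply, Pi.smul_apply, smul_eq_mul,
    single_eq_same, coe_zero, Pi.zero_apply] at h hβj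
  nlinarith

theorem exists_ne_conjRoot_pos (hβ : 0 ≤ conjRoot cs s w)
    (hneg : cosForm M (conjRoot cs s w) (simpleRoot j) < 0) :
    ∃ k ≠ j, 0 < conjRoot cs s w k := by
  by_contra! hle
  have hsingle : conjRoot cs s w = conjRoot cs s w j • simpleRoot j := by
    ext k
    rcases eq_or_ne k j with rfl | hk
    · simp
    · simpa [hk] using (hle k hk).antisymm (hβ k)
  rw [hsingle] at hneg
  simp only [map_smul, LinearMap.smul_apply, cosForm_simpleRoot, cosMatrix_self, smul_eq_mul,
    mul_one] at hneg
  exact hneg.not_ge (hβ j)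

theorem not_isRightDescent_simple_mul_conj (hβ : 0 ≤ conjRoot cs s w)
    (hneg : cosForm M (conjRoot cs s w) (simpleRoot j) < 0) :
    ¬cs.IsRightDescent (cs.simple j * (w⁻¹ * cs.simple s * w)) j := by
  intro hdesc
  obtain ⟨k, hk, hpos⟩ := exists_ne_conjRoot_pos hβ hneg
  have h := geomRep_simpleRoot_nonpos cs hdesc k
  simp only [geomRep_simple_mul_conj_simpleRoot, conjRoot_mul_simple, coe_sub, coe_neg, coe_smul,
    Pi.sub_apply, Pi.neg_apply, Pi.smul_apply, smul_eq_mul, single_eq_of_ne hk, coe_zero,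
    Pi.zero_apply] at h
  nlinarith

theorem length_conj_lt_of_cosForm_neg (hβ : 0 ≤ conjRoot cs s w)
    (hneg : cosForm M (conjRoot cs s w) (simpleRoot j) < 0) :
    cs.length (w⁻¹ * cs.simple s * w) <
      cs.length ((w * cs.simple j)⁻¹ * cs.simple s * (w * cs.simple j)) := by
  have hleft : ¬cs.IsLeftDescent (w⁻¹ * cs.simple s * w) j := by
    rw [← cs.isRightDescent_inv_iff, conj_simple_inv]
    exact not_isRightDescent_conj hβ hneg
  have h := cs.not_isLeftDescent_iff.mp hleft
  have h' := cs.not_isRightDescent_iff.mp (not_isRightDescent_simple_mul_conj hβ hneg)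
  rw [conj_mul_simple]
  lia

theorem cosForm_neg_of_length_conj (hβ : 0 ≤ conjRoot cs s (w * cs.simple j))
    (hlen : cs.length (w⁻¹ * cs.simple s * w) + 2 ≤
      cs.length ((w * cs.simple j)⁻¹ * cs.simple s * (w * cs.simple j))) :
    cosForm M (conjRoot cs s w) (simpleRoot j) < 0 := by
  rw [conj_mul_simple] at hlen
  have hdesc : ¬cs.IsRightDescent (cs.simple j * (w⁻¹ * cs.simple s * w)) j := by
    rw [cs.isRightDescent_iff]
    have := cs.length_simple_mul (w⁻¹ * cs.simple s * w) j
    lia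
  have h := geomRep_simpleRoot_nonneg cs hdesc j
  have hβj := hβ j
  simp only [geomRep_simple_mul_conj_simpleRoot, coe_sub, coe_neg, coe_smul, Pi.sub_apply,
    Pi.neg_apply, Pi.smul_apply, smul_eq_mul, single_eq_same, coe_zero, Pi.zero_apply] at h hβj
  by_contra! hnonneg
  nlinarith

theorem conjRoot_nonneg
    (hlen : cs.length (w⁻¹ * cs.simple s * w) = 2 * cs.length w + 1) :
    0 ≤ conjRoot cs s w := by
  refine geomRep_simpleRoot_nonneg cs fun hdesc ↦ ?_
  have h := cs.isRightDescent_iff.mp hdesc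
  have h' := cs.length_mul_le (w⁻¹ * cs.simple s) w
  rw [cs.length_inv] at h
  lia

theorem length_conj_eq_of_mul_simple (hj : ¬cs.IsRightDescent w j)
    (hlen : cs.length ((w * cs.simple j)⁻¹ * cs.simple s * (w * cs.simple j)) =
      2 * cs.length (w * cs.simple j) + 1) :
    cs.length (w⁻¹ * cs.simple s * w) = 2 * cs.length w + 1 := by
  rw [conj_mul_simple, cs.not_isRightDescent_iff.mp hj] at hlen
  have hup := cs.length_mul_le (w⁻¹ * cs.simple s) w
  have hup' := cs.length_mul_le w⁻¹ (cs.simple s)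
  have hlow := cs.length_simple_mul (w⁻¹ * cs.simple s * w) j
  have hlow' := cs.length_mul_simple (cs.simple j * (w⁻¹ * cs.simple s * w)) j
  rw [cs.length_inv, cs.length_simple] at hup'
  lia

@[elab_as_elim]
theorem induction_of_length_conj {P : W → Prop}
    (hlen : cs.length (w⁻¹ * cs.simple s * w) = 2 * cs.length w + 1) (one : P 1)
    (mul_simple : ∀ v j, 0 ≤ conjRoot cs s v →
      cosForm M (conjRoot cs s v) (simpleRoot j) < 0 → P v → P (v * cs.simple j)) : P w := by
  induction w using induction_of_not_isRightDescent cs with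
  | one => exact one
  | mul_simple v j hj ih =>
    have hlen' := length_conj_eq_of_mul_simple hj hlen
    have hstep := cs.not_isRightDescent_iff.mp hj
    exact mul_simple v j (conjRoot_nonneg hlen')
      (cosForm_neg_of_length_conj (conjRoot_nonneg hlen) (by lia)) (ih hlen')

end ConjugateRoot

section Support

variable {cs : CoxeterSystem M W} {s j : B} {w : W}

variable (M) in
/-- The Coxeter graph, joining `i ≠ j` when `⟨αᵢ, αⱼ⟩ ≠ 0`, that is, when `mᵢⱼ ≠ 2`. -/
def coxeterGraph : SimpleGraph B where
  Adj i j := i ≠ j ∧ cosMatrix M i j ≠ 0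
  symm := ⟨fun i j h ↦ ⟨h.1.symm, cosMatrix_comm i j ▸ h.2⟩⟩
  loopless := ⟨fun _ h ↦ h.1 rfl⟩

theorem exists_cosMatrix_ne_zero_of_cosForm_ne_zero {x : B →₀ ℝ} {j : B}
    (h : cosForm M x (simpleRoot j) ≠ 0) : ∃ i ∈ x.support, cosMatrix M i j ≠ 0 := by
  contrapose! h
  rw [cosForm_eq_sum_mul_left]
  exact Finset.sum_eq_zero fun i hi ↦ by simp [h i hi]

theorem support_conjRoot_mul_simple (hβ : 0 ≤ conjRoot cs s w)
    (hneg : cosForm M (conjRoot cs s w) (simpleRoot j) < 0) :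
    ((conjRoot cs s (w * cs.simple j)).support : Set B) =
      insert j ↑(conjRoot cs s w).support := by
  ext k
  simp only [conjRoot_mul_simple, Finset.mem_coe, mem_support_iff, Set.mem_insert_iff, coe_sub,
    coe_smul, Pi.sub_apply, Pi.smul_apply, smul_eq_mul]
  rcases eq_or_ne k j with rfl | hk
  · have hβk := hβ k
    simp only [coe_zero, Pi.zero_apply, single_eq_same] at hβk ⊢
    exact iff_of_true (by linarith) (.inl trivial)
  · simp [hk]

variable (hlen : cs.length (w⁻¹ * cs.simple s * w) = 2 * cs.length w + 1)
include hlen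

theorem mem_support_conjRoot : s ∈ (conjRoot cs s w).support := by
  refine induction_of_length_conj hlen ?_ fun v j hβ hneg ih ↦ ?_
  · simp
  · rw [← Finset.mem_coe, support_conjRoot_mul_simple hβ hneg]
    exact Or.inr ih

theorem mem_closure_support_conjRoot :
    w ∈ Subgroup.closure (cs.simple '' (conjRoot cs s w).support) := by
  refine induction_of_length_conj hlen ?_ fun v j hβ hneg ih ↦ ?_
  · exact one_mem _
  · rw [support_conjRoot_mul_simple hβ hneg]
    exact mul_mem (Subgroup.closure_mono (Set.image_mono (Set.subset_insert _ _)) ih)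
      (Subgroup.subset_closure ⟨j, Set.mem_insert _ _, rfl⟩)

theorem preconnected_coxeterGraph_support_conjRoot :
    ((coxeterGraph M).induce ((conjRoot cs s w).support : Set B)).Preconnected := by
  refine induction_of_length_conj hlen ?_ fun v j hβ hneg ih ↦ ?_
  · rw [conjRoot_one, support_single _ one_ne_zero, Finset.coe_singleton]
    exact .of_subsingleton
  · rw [support_conjRoot_mul_simple hβ hneg]
    by_cases hj : j ∈ (conjRoot cs s v).support
    · rwa [Set.insert_eq_of_mem (Finset.mem_coe.mpr hj)]
    obtain ⟨i, hi, hij⟩ := exists_cosMatrix_ne_zero_of_cosForm_ne_zero hneg.ne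
    have hadj : (coxeterGraph M).Adj i j := ⟨fun h ↦ hj (h ▸ hi), hij⟩
    rw [← Set.union_singleton]
    exact (SimpleGraph.connected_induce_union (t := {j}) ih .of_subsingleton hi rfl
      hadj).preconnected

end Support

section Vinberg

variable {ι : Type*} {A : Matrix ι ι ℝ} {β y : ι → ℝ}

theorem dotProduct_mulVec_mul_self [Fintype ι] (hA : A.IsSymm) (β y : ι → ℝ) :
    (y * β) ⬝ᵥ A *ᵥ (y * β) = ∑ i, y i ^ 2 * (β i * (A *ᵥ β) i) -
      1 / 2 * ∑ i, ∑ j, A i j * (β i * β j) * (y i - y j) ^ 2 := by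
  have hdiag : ∑ i, y i ^ 2 * (β i * (A *ᵥ β) i) =
      ∑ i, ∑ j, A i j * (β i * β j) * y i ^ 2 := by
    simp only [Matrix.mulVec, dotProduct, Finset.mul_sum]
    exact Finset.sum_congr rfl fun i _ ↦ Finset.sum_congr rfl fun j _ ↦ by ring
  have hswap : ∑ i, ∑ j, A i j * (β i * β j) * y j ^ 2 =
      ∑ i, ∑ j, A i j * (β i * β j) * y i ^ 2 := by
    rw [Finset.sum_comm]
    exact Finset.sum_congr rfl fun i _ ↦ Finset.sum_congr rfl fun j _ ↦ by
      rw [hA.apply]; ring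
  have hexpand : ∑ i, ∑ j, A i j * (β i * β j) * (y i - y j) ^ 2 =
      ∑ i, ∑ j, A i j * (β i * β j) * y i ^ 2 + ∑ i, ∑ j, A i j * (β i * β j) * y j ^ 2 -
        2 * (y * β) ⬝ᵥ A *ᵥ (y * β) := by
    simp only [Matrix.mulVec, dotProduct, Finset.mul_sum, ← Finset.sum_add_distrib,
      ← Finset.sum_sub_distrib, Pi.mul_apply]
    exact Finset.sum_congr rfl fun i _ ↦ Finset.sum_congr rfl fun j _ ↦ by ring
  rw [hdiag, hexpand, hswap]
  ring

variable (hβ : ∀ i, 0 < β i) (hA : ∀ i j, i ≠ j → A i j ≤ 0)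
include hβ hA

theorem mul_sq_sub_nonpos (i j : ι) : A i j * (β i * β j) * (y i - y j) ^ 2 ≤ 0 := by
  rcases eq_or_ne i j with rfl | hij
  · simp
  · exact mul_nonpos_of_nonpos_of_nonneg
      (mul_nonpos_of_nonpos_of_nonneg (hA i j hij) (mul_pos (hβ i) (hβ j)).le) (sq_nonneg _)

theorem eq_of_sum_mul_sq_sub_eq_zero [Fintype ι] {G : SimpleGraph ι} (hG : G.Preconnected)
    (hAG : ∀ i j, G.Adj i j → A i j ≠ 0)
    (hzero : ∑ i, ∑ j, A i j * (β i * β j) * (y i - y j) ^ 2 = 0) (i j : ι) : y i = y j := by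
  have hterm := mul_sq_sub_nonpos (y := y) hβ hA
  have hadj : ∀ i j, G.Adj i j → y i = y j := fun i j hij ↦ by
    have hi := (Finset.sum_eq_zero_iff_of_nonpos fun i _ ↦
      Finset.sum_nonpos fun j _ ↦ hterm i j).mp hzero i (Finset.mem_univ i)
    have hj := (Finset.sum_eq_zero_iff_of_nonpos fun j _ ↦
      hterm i j).mp hi j (Finset.mem_univ j)
    simpa [hAG i j hij, (hβ i).ne', (hβ j).ne', sub_eq_zero] using hj
  obtain ⟨p⟩ := hG i j
  induction p with
  | nil => rfl
  | cons h _ ih => exact (hadj _ _ h).trans ih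

theorem dotProduct_mulVec_mul_self_pos [Fintype ι] (hsymm : A.IsSymm) {G : SimpleGraph ι}
    (hG : G.Preconnected) (hAG : ∀ i j, G.Adj i j → A i j ≠ 0) (hne : β ⬝ᵥ A *ᵥ β ≠ 0)
    (hy : y ≠ 0) (hnonneg : ∀ i, y i ≠ 0 → 0 ≤ (A *ᵥ β) i) :
    0 < (y * β) ⬝ᵥ A *ᵥ (y * β) := by
  have hdiag : 0 ≤ ∑ i, y i ^ 2 * (β i * (A *ᵥ β) i) := Finset.sum_nonneg fun i _ ↦ by
    rcases eq_or_ne (y i) 0 with hi | hi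
    · simp [hi]
    · exact mul_nonneg (sq_nonneg _) (mul_nonneg (hβ i).le (hnonneg i hi))
  have hoff : ∑ i, ∑ j, A i j * (β i * β j) * (y i - y j) ^ 2 ≤ 0 :=
    Finset.sum_nonpos fun i _ ↦ Finset.sum_nonpos fun j _ ↦ mul_sq_sub_nonpos hβ hA i j
  have hidentity := dotProduct_mulVec_mul_self hsymm β y
  rcases hoff.lt_or_eq with hlt | hzero
  · linarith
  obtain ⟨k, hk⟩ := Function.ne_iff.mp hy
  have hconst : ∀ i, y i = y k := fun i ↦ eq_of_sum_mul_sq_sub_eq_zero hβ hA hG hAG hzero i k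
  have hsum : ∑ i, y i ^ 2 * (β i * (A *ᵥ β) i) = y k ^ 2 * (β ⬝ᵥ A *ᵥ β) := by
    simp only [hconst, dotProduct, Finset.mul_sum]
  have hsum_ne : y k ^ 2 * (β ⬝ᵥ A *ᵥ β) ≠ 0 := mul_ne_zero (pow_ne_zero 2 hk) hne
  rw [← hsum] at hsum_ne
  rw [hidentity, hzero, mul_zero, sub_zero]
  exact hdiag.lt_of_ne' hsum_ne

end Vinberg

section PositiveDefinite

theorem cosForm_simpleRoot_eq_mulVec {y : B →₀ ℝ} {T : Finset B} (hy : y.support ⊆ T)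
    (i : (T : Set B)) :
    cosForm M (simpleRoot i) y =
      ((cosMatrix M).submatrix (↑) (↑) *ᵥ (T : Set B).domRestrict y) i := by
  rw [cosForm_apply, sum_single_index (by simp), sum_of_support_subset y hy _ (by simp),
    ← Finset.sum_coe_sort T]
  exact Finset.sum_congr rfl fun j _ ↦ one_mul _

theorem cosForm_eq_dotProduct {x y : B →₀ ℝ} {T : Finset B} (hx : x.support ⊆ T)
    (hy : y.support ⊆ T) :
    cosForm M x y = (T : Set B).domRestrict x ⬝ᵥ
      (cosMatrix M).submatrix (↑) (↑) *ᵥ (T : Set B).domRestrict y := by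
  rw [cosForm_eq_sum_mul_left, sum_of_support_subset x hx _ (by simp), ← Finset.sum_coe_sort T]
  exact Finset.sum_congr rfl fun i _ ↦ congrArg _ (cosForm_simpleRoot_eq_mulVec hy i)

theorem cosForm_self_pos {β x : B →₀ ℝ} (hβ : 0 ≤ β) (hββ : cosForm M β β ≠ 0)
    (hconn : ((coxeterGraph M).induce (β.support : Set B)).Preconnected) (hx : x ≠ 0)
    (hxβ : ∀ k ∈ x.support, k ∈ β.support ∧ 0 ≤ cosForm M β (simpleRoot k)) :
    0 < cosForm M x x := by
  have hsub : x.support ⊆ β.support := fun k hk ↦ (hxβ k hk).1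
  set b := (β.support : Set B).domRestrict β
  have hbpos : ∀ i, 0 < b i := fun i ↦ (hβ i).lt_of_ne' (mem_support_iff.mp i.2)
  set y := (β.support : Set B).domRestrict x / b
  have hxy : y * b = (β.support : Set B).domRestrict x :=
    funext fun i ↦ div_mul_cancel₀ _ (hbpos i).ne'
  rw [cosForm_eq_dotProduct subset_rfl subset_rfl] at hββ
  rw [cosForm_eq_dotProduct hsub hsub, ← hxy]
  refine dotProduct_mulVec_mul_self_pos hbpos (fun i j hij ↦ cosMatrix_nonpos
    (Subtype.coe_injective.ne hij)) (Matrix.IsSymm.ext fun i j ↦ cosMatrix_comm _ _) hconn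
    (fun i j hij ↦ hij.2) hββ ?_ fun i hi ↦ ?_
  · obtain ⟨k, hk⟩ := Finsupp.ne_iff.mp hx
    have hkβ : k ∈ β.support := hsub (mem_support_iff.mpr hk)
    exact Function.ne_iff.mpr ⟨⟨k, hkβ⟩, div_ne_zero hk (hbpos ⟨k, hkβ⟩).ne'⟩
  · have hxi : (i : B) ∈ x.support := mem_support_iff.mpr (div_ne_zero_iff.mp hi).1
    have h := (hxβ i hxi).2
    rwa [cosForm_comm, cosForm_simpleRoot_eq_mulVec subset_rfl] at h

end PositiveDefinite

section Finiteness

/-- The height of a vector, the sum of its coordinates in the basis of simple roots. -/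
def height : (B →₀ ℝ) →ₗ[ℝ] ℝ := linearCombination ℝ fun _ ↦ 1

@[simp]
theorem height_simpleRoot (i : B) : height (simpleRoot i) = 1 := by
  simp [height]

theorem height_apply (x : B →₀ ℝ) : height x = x.sum fun _ a ↦ a := by
  simp [height, linearCombination_apply]

theorem cosForm_self_le_height_sq {x : B →₀ ℝ} (hx : 0 ≤ x) : cosForm M x x ≤ height x ^ 2 := by
  rw [cosForm_apply, height_apply, sq, Finsupp.sum, Finsupp.sum, Finset.sum_mul_sum]
  refine Finset.sum_le_sum fun i _ ↦ Finset.sum_le_sum fun j _ ↦ ?_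
  exact mul_le_mul_of_nonneg_left (mul_le_of_le_one_left (hx j) (cosMatrix_le_one i j)) (hx i)

theorem one_le_height {x : B →₀ ℝ} (hx : 0 ≤ x) (hnorm : cosForm M x x = 1) : 1 ≤ height x := by
  have hheight : 0 ≤ height x := by
    rw [height_apply]
    exact Finset.sum_nonneg fun i _ ↦ hx i
  exact (one_le_sq_iff₀ hheight).mp (hnorm ▸ cosForm_self_le_height_sq hx)

variable (cs : CoxeterSystem M W)

theorem finite_of_length_le [Finite B] {N : ℕ} (hN : ∀ w, cs.length w ≤ N) : Finite W := by
  refine Set.finite_univ_iff.mp (((List.finite_length_le B N).image cs.wordProd).subset ?_)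
  intro w _
  obtain ⟨l, hl, rfl⟩ := cs.exists_isReduced w
  exact ⟨l, hl.eq.symm.trans_le (hN _), rfl⟩

variable {cs} {p : B →₀ ℝ}

theorem two_mul_length_le_of_cosForm_eq_height (hp : ∀ x, cosForm M p x = height x) (w : W) :
    2 * (cs.length w : ℝ) ≤ cosForm M p p - cosForm M p (geomRep cs w p) := by
  induction w using induction_of_not_isRightDescent cs with
  | one => simp
  | mul_simple v j hj ih =>
    have hnorm : cosForm M (geomRep cs v (simpleRoot j)) (geomRep cs v (simpleRoot j)) = 1 := by
      rw [cosForm_geomRep, cosForm_simpleRoot, cosMatrix_self]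
    -- Each letter of a reduced word lowers `⟨p, wp⟩` by twice the height of a positive root.
    have hheight := one_le_height (geomRep_simpleRoot_nonneg cs hj) hnorm
    rw [geomRep_mul_apply, geomRep_simple_apply, cosForm_comm (simpleRoot j), hp (simpleRoot j),
      height_simpleRoot, map_sub, map_smul, map_sub, map_smul, hp (geomRep cs v (simpleRoot j)),
      cs.not_isRightDescent_iff.mp hj]
    push_cast
    simp only [smul_eq_mul]
    linarith

theorem length_le_of_cosForm_eq_height (hnonneg : ∀ x, 0 ≤ cosForm M x x)
    (hp : ∀ x, cosForm M p x = height x) (w : W) : (cs.length w : ℝ) ≤ cosForm M p p := by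
  have hlow := two_mul_length_le_of_cosForm_eq_height (cs := cs) hp w
  have hsq := hnonneg (p + geomRep cs w p)
  simp only [map_add, LinearMap.add_apply, cosForm_geomRep, cosForm_comm (geomRep cs w p) p] at hsq
  linarith

theorem finite_of_posDef [Finite B] (cs : CoxeterSystem M W)
    (hpos : ∀ x, x ≠ 0 → 0 < cosForm M x x) : Finite W := by
  have hnonneg : ∀ x, 0 ≤ cosForm M x x := fun x ↦ by
    rcases eq_or_ne x 0 with rfl | hx
    · simp
    · exact (hpos x hx).le
  have hnondeg : (cosForm M).Nondegenerate :=
    ((cosForm M).nondegenerate_iff' hnonneg ⟨cosForm_comm⟩).mpr fun x ↦ hpos x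
  obtain ⟨p, hp⟩ : ∃ p, ∀ x, cosForm M p x = height x :=
    ⟨_, LinearMap.BilinForm.apply_toDual_symm_apply (hB := hnondeg) height⟩
  obtain ⟨N, hN⟩ := exists_nat_ge (cosForm M p p)
  exact finite_of_length_le cs fun w ↦
    mod_cast (length_le_of_cosForm_eq_height hnonneg hp w).trans hN

end Finiteness

section Parabolic

/-- The Coxeter matrix of a standard parabolic subgroup, the restriction of `M` to `K`. -/
def parabolicMatrix (M : CoxeterMatrix B) (K : Set B) : CoxeterMatrix K where
  M := M.M.submatrix (↑) (↑)
  isSymm := M.isSymm.submatrix _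
  diagonal i := M.diagonal i
  off_diagonal i j h := M.off_diagonal i j (Subtype.coe_injective.ne h)

variable {K : Set B}

theorem cosForm_lmapDomain (x y : K →₀ ℝ) :
    cosForm M (lmapDomain ℝ ℝ (↑) x) (lmapDomain ℝ ℝ (↑) y) =
      cosForm (parabolicMatrix M K) x y := by
  have h : (cosForm M).compl₁₂ (lmapDomain ℝ ℝ ((↑) : K → B)) (lmapDomain ℝ ℝ (↑)) =
      cosForm (parabolicMatrix M K) := by
    ext i j
    simp [cosMatrix_apply, parabolicMatrix]
  exact DFunLike.congr_fun (DFunLike.congr_fun h x) y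

variable (cs : CoxeterSystem M W)

theorem isLiftable_parabolicMatrix_simple : (parabolicMatrix M K).IsLiftable fun i ↦ cs.simple i :=
  fun i j ↦ cs.simple_mul_simple_pow i j

theorem closure_le_range_lift_parabolicMatrix :
    Subgroup.closure (cs.simple '' K) ≤ MonoidHom.range
      ((parabolicMatrix M K).toCoxeterSystem.lift ⟨_, isLiftable_parabolicMatrix_simple cs⟩) := by
  rw [Subgroup.closure_le]
  rintro _ ⟨k, hk, rfl⟩
  exact ⟨_, CoxeterSystem.lift_apply_simple _ (isLiftable_parabolicMatrix_simple cs) ⟨k, hk⟩⟩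

theorem spherical_of_posDef (hK : K.Finite)
    (hpos : ∀ x ∈ supported ℝ ℝ K, x ≠ 0 → 0 < cosForm M x x) : Spherical cs K := by
  have := hK.to_subtype
  have := finite_of_posDef (parabolicMatrix M K).toCoxeterSystem fun x hx ↦ by
    rw [← cosForm_lmapDomain]
    refine hpos _ ((mem_supported' ℝ _).mpr fun k hk ↦ mapDomain_of_notMem_range x k (by simpa)) ?_
    exact (map_ne_zero_iff _ (mapDomain_injective Subtype.coe_injective)).mpr hx
  exact (Set.finite_range _).subset (closure_le_range_lift_parabolicMatrix cs)

end Parabolic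

end CoxeterGeometry

end

open CoxeterGeometry in
theorem shadow_spherical_general (cs : CoxeterSystem M W) (s : B) (w : W)
    (hlen : cs.length (w⁻¹ * cs.simple s * w) = 2 * cs.length w + 1) (J : Set B)
    (hJ : IsSupport cs s w J) : Spherical cs (shadow cs s w J) := by
  have hβ := conjRoot_nonneg hlen
  have hJβ : J ⊆ (conjRoot cs s w).support :=
    hJ.2.2 _ (mem_support_conjRoot hlen) (mem_closure_support_conjRoot hlen)
  have hfin : (shadow cs s w J).Finite :=
    (Finset.finite_toSet _).subset ((Set.sep_subset _ _).trans hJβ)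
  refine spherical_of_posDef cs hfin fun x hx hx0 ↦
    cosForm_self_pos hβ (by simp) (preconnected_coxeterGraph_support_conjRoot hlen) hx0
      fun k hk ↦ ?_
  obtain ⟨hkJ, hshadow⟩ := hx hk
  refine ⟨hJβ hkJ, ?_⟩
  contrapose! hshadow
  exact length_conj_lt_of_cosForm_neg hβ hshadow

/-- The shadow of a base generates a finite subgroup. -/
theorem shadow_spherical
    [Finite B] (cs : CoxeterSystem M W) (s : B) (w : W)
    (hbase : IsBase cs s w) (J : Set B) (hJ : IsSupport cs s w J) :
    (Subgroup.closure (cs.simple '' shadow cs s w J) : Set W).Finite :=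
  shadow_spherical_general cs s w hbase.1 J hJ
end

section
/- Let (W,S) be a Coxeter system with S finite and twist-rigid. Let J ⊆ S be irreducible, 2-spherical and non-spherical, let K ⊆ J be spherical (possibly reducible), and let m ∈ S∖(J∪J⊥). Then at least one of the following holds: (i) m lies in the same connected component of S∖(K∪J⊥) (with respect to the adjacency graph) as some element of J∖K; or (ii) m is not adjacent to any element of J∖K, m commutes with every element of K, and J∪{m} is twist-rigid. -/
variable {B : Type*} {W : Type*} [Group W] {M : CoxeterMatrix B}

/-! Let `L ⊆ J` be irreducible spherical with `K ⊆ L ∪ L⊥` and suppose `m ∉ L ∪ L⊥`. Since `J`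
is irreducible and not spherical, some `j ∈ J` also lies outside `L ∪ L⊥`, and twist-rigidity joins
`m` to `j` outside `L ∪ L⊥ ⊇ K ∪ J⊥`. So if (i) fails, then `m ∈ L ∪ L⊥` for every such `L`.
Applied to the irreducible components of `K`, this shows that `m` commutes with `K`. For
twist-rigidity of `J ∪ {m}`, removing `L ∪ L⊥` either removes `m`, leaving a part of the 2-spherical
set `J`, or leaves some `k ∈ K`, which is adjacent to every other remaining element. -/

theorem finite_closure_pair_of_commute {G : Type*} [Group G] {a b : G} (ha : IsOfFinOrder a)
    (hb : IsOfFinOrder b) (hab : Commute a b) : (Subgroup.closure {a, b} : Set G).Finite := by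
  have hcomm (x : Subgroup.zpowers a) (y : Subgroup.zpowers b) :
      Commute ((Subgroup.zpowers a).subtype x) ((Subgroup.zpowers b).subtype y) := by
    obtain ⟨_, i, rfl⟩ := x
    obtain ⟨_, j, rfl⟩ := y
    exact hab.zpow_zpow i j
  have : Finite (Subgroup.zpowers a) := ha.finite_zpowers
  have : Finite (Subgroup.zpowers b) := hb.finite_zpowers
  have hrange : Subgroup.closure {a, b} = (MonoidHom.noncommCoprod _ _ hcomm).range := by
    rw [MonoidHom.noncommCoprod_range, Subgroup.range_subtype, Subgroup.range_subtype,
      Subgroup.zpowers_eq_closure, Subgroup.zpowers_eq_closure, ← Subgroup.closure_union,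
      Set.singleton_union]
  rw [hrange, MonoidHom.coe_range]
  exact Set.finite_range _

section Adjacency

variable {cs : CoxeterSystem M W} {J K : Set B} {i j : B}

theorem Spherical.mono (hJ : Spherical cs J) (hKJ : K ⊆ J) : Spherical cs K :=
  Set.Finite.subset hJ (Subgroup.closure_mono (Set.image_mono hKJ))

theorem Adjacent.symm (h : Adjacent cs i j) : Adjacent cs j i := by
  rwa [Adjacent, Set.pair_comm]

theorem Adjacent.of_commute (h : Commute (cs.simple i) (cs.simple j)) : Adjacent cs i j :=
  have hfin (i : B) : IsOfFinOrder (cs.simple i) :=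
    isOfFinOrder_iff_pow_eq_one.2 ⟨2, two_pos, cs.simple_sq i⟩
  finite_closure_pair_of_commute (hfin i) (hfin j) h

theorem TwoSpherical.mono (hJ : TwoSpherical cs J) (hKJ : K ⊆ J) : TwoSpherical cs K :=
  fun i hi j hj => hJ i (hKJ hi) j (hKJ hj)

end Adjacency

section Connectedness

variable {cs : CoxeterSystem M W} {T U : Set B} {a b c : B}

/-- `a` and `b` lie in the same connected component of `T` for the adjacency graph; in particular
both belong to `T`. -/
def SameComponentIn (cs : CoxeterSystem M W) (T : Set B) (a b : B) : Prop :=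
  a ∈ T ∧ b ∈ T ∧
    Relation.ReflTransGen (fun x y => x ∈ T ∧ y ∈ T ∧ Adjacent cs x y) a b

theorem SameComponentIn.mono (h : SameComponentIn cs T a b) (hTU : T ⊆ U) :
    SameComponentIn cs U a b :=
  ⟨hTU h.1, hTU h.2.1,
    Relation.ReflTransGen.mono (fun _ _ ⟨hx, hy, hxy⟩ => ⟨hTU hx, hTU hy, hxy⟩) _ _ h.2.2⟩

theorem Adjacent.sameComponentIn (h : Adjacent cs a b) (ha : a ∈ T) (hb : b ∈ T) :
    SameComponentIn cs T a b :=
  ⟨ha, hb, .single ⟨ha, hb, h⟩⟩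

theorem connectedIn_of_forall_adjacent (hc : c ∈ T) (hadj : ∀ x ∈ T, Adjacent cs x c) :
    ConnectedIn cs T := fun a ha b hb =>
  .tail (.single ⟨ha, hc, hadj a ha⟩) ⟨hc, hb, (hadj b hb).symm⟩

theorem TwoSpherical.connectedIn (hT : TwoSpherical cs T) : ConnectedIn cs T :=
  fun a ha b hb => .single ⟨ha, hb, hT a ha b hb⟩

end Connectedness

section ClosedPerp

variable {cs : CoxeterSystem M W} {J L T : Set B}

/-- The set `L ∪ L⊥`, with `L⊥` taken in the whole index set. -/
def closedPerp (cs : CoxeterSystem M W) (L : Set B) : Set B :=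
  {x | x ∈ L ∨ ∀ l ∈ L, Commute (cs.simple x) (cs.simple l)}

theorem sdiff_union_perpIn : T \ (L ∪ perpIn cs T L) = T \ closedPerp cs L := by
  ext x
  simp only [perpIn, closedPerp, Set.mem_sdiff, Set.mem_union, Set.mem_ofPred_eq]
  tauto

theorem perpIn_subset_closedPerp (hLJ : L ⊆ J) : perpIn cs T J ⊆ closedPerp cs L :=
  fun _ hx => Or.inr fun l hl => hx.2 l (hLJ hl)

theorem nonempty_of_notMem_closedPerp {x : B} (hx : x ∉ closedPerp cs L) : L.Nonempty := by
  contrapose! hx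
  simp [closedPerp, hx]

end ClosedPerp

section IrreducibleComponents

variable {cs : CoxeterSystem M W} {J K : Set B} {k : B}

theorem irreducibleSubset_iff_forall_eq : IrreducibleSubset cs J ↔
    ∀ L ⊆ J, L.Nonempty → J ⊆ closedPerp cs L → L = J := by
  constructor
  · intro hJ L hLJ hL hJL
    by_contra hne
    have hdiff : (J \ L).Nonempty :=
      Set.sdiff_nonempty.2 fun hJL' => hne (hLJ.antisymm hJL')
    exact hJ ⟨J \ L, L, hdiff, hL, Set.disjoint_sdiff_left, Set.sdiff_union_of_subset hLJ,
      fun x hx => (hJL hx.1).resolve_left hx.2⟩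
  · rintro h ⟨A, C, hA, ⟨c, hc⟩, hdisj, rfl, hcomm⟩
    have hAC : A = A ∪ C := h A Set.subset_union_left hA <| Set.union_subset
      (fun _ ha => Or.inl ha) fun c hc => Or.inr fun a ha => (hcomm a ha c hc).symm
    exact hdisj.notMem_of_mem_right hc (hAC ▸ Or.inr hc)

/-- The component of `k` in the Coxeter diagram of `K`: the elements reached from `k` by a path in
`K` whose consecutive members do not commute. It contains `k` even if `k ∉ K`. -/
def diagramComponent (cs : CoxeterSystem M W) (K : Set B) (k : B) : Set B :=
  {x | Relation.ReflTransGen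
    (fun y z => z ∈ K ∧ ¬ Commute (cs.simple y) (cs.simple z)) k x}

theorem mem_diagramComponent_self : k ∈ diagramComponent cs K k :=
  .refl

theorem diagramComponent_subset (hk : k ∈ K) : diagramComponent cs K k ⊆ K := by
  rintro x (_ | ⟨-, hx⟩)
  exacts [hk, hx.1]

theorem subset_closedPerp_diagramComponent :
    K ⊆ closedPerp cs (diagramComponent cs K k) := by
  intro x hx
  by_contra hnot
  simp only [closedPerp, Set.mem_ofPred_eq, not_or, not_forall] at hnot
  obtain ⟨hxk, y, hy, hxy⟩ := hnot
  exact hxk (.tail hy ⟨hx, fun h => hxy h.symm⟩)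

theorem irreducibleSubset_diagramComponent :
    IrreducibleSubset cs (diagramComponent cs K k) := by
  refine irreducibleSubset_iff_forall_eq.2 fun L hL ⟨l, hl⟩ hperp => hL.antisymm ?_
  have mem_iff : ∀ x ∈ diagramComponent cs K k, (x ∈ L ↔ k ∈ L) := by
    intro x hx
    induction hx with
    | refl => rfl
    | @tail y z hy hyz ih =>
      rw [← ih]
      constructor <;> intro hmem <;> by_contra hnot
      · exact hyz.2 ((hperp hy).resolve_left hnot z hmem)
      · exact hyz.2 ((hperp (.tail hy hyz)).resolve_left hnot y hmem).symm
  exact fun x hx => (mem_iff x hx).2 ((mem_iff l (hL hl)).1 hl)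

end IrreducibleComponents

section TwistRigidity

variable {cs : CoxeterSystem M W} {J K L T : Set B} {m : B}

theorem IrreducibleSubset.exists_notMem_closedPerp (hJ : IrreducibleSubset cs J)
    (hJns : ¬ Spherical cs J) (hLJ : L ⊆ J) (hL : L.Nonempty) (hLs : Spherical cs L) :
    ∃ j ∈ J, j ∉ closedPerp cs L := by
  by_contra! hJL
  exact hJns (irreducibleSubset_iff_forall_eq.1 hJ L hLJ hL hJL ▸ hLs)

theorem TwistRigidIn.exists_sameComponentIn (hT : TwistRigidIn cs T) (hJT : J ⊆ T)
    (hJ : IrreducibleSubset cs J) (hJns : ¬ Spherical cs J) (hLJ : L ⊆ J)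
    (hL : IrreducibleSubset cs L) (hLs : Spherical cs L) (hKL : K ⊆ closedPerp cs L)
    (hm : m ∈ T \ closedPerp cs L) :
    ∃ j ∈ J \ K, SameComponentIn cs (T \ (K ∪ perpIn cs T J)) m j := by
  obtain ⟨j, hjJ, hjL⟩ :=
    hJ.exists_notMem_closedPerp hJns hLJ (nonempty_of_notMem_closedPerp hm.2) hLs
  have hconn : ConnectedIn cs (T \ closedPerp cs L) := by
    simpa only [sdiff_union_perpIn] using hT L (hLJ.trans hJT) hL hLs
  have hjT : j ∈ T \ closedPerp cs L := ⟨hJT hjJ, hjL⟩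
  have hsame : SameComponentIn cs (T \ closedPerp cs L) m j := ⟨hm, hjT, hconn m hm j hjT⟩
  exact ⟨j, ⟨hjJ, fun hjK => hjL (hKL hjK)⟩, hsame.mono <|
    Set.sdiff_subset_sdiff_right <| Set.union_subset hKL (perpIn_subset_closedPerp hLJ)⟩

theorem commute_of_forall_mem_closedPerp (hKs : Spherical cs K) (hmK : m ∉ K)
    (hm : ∀ L ⊆ K, IrreducibleSubset cs L → Spherical cs L → K ⊆ closedPerp cs L →
      m ∈ closedPerp cs L) :
    ∀ k ∈ K, Commute (cs.simple m) (cs.simple k) := by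
  intro k hk
  have hsub : diagramComponent cs K k ⊆ K := diagramComponent_subset hk
  have hmem : m ∈ closedPerp cs (diagramComponent cs K k) :=
    hm _ hsub irreducibleSubset_diagramComponent (hKs.mono hsub)
      subset_closedPerp_diagramComponent
  exact hmem.resolve_left (fun h => hmK (hsub h)) k mem_diagramComponent_self

theorem TwoSpherical.twistRigidIn_union_singleton (hJ : TwoSpherical cs J) (hKJ : K ⊆ J)
    (hcomm : ∀ k ∈ K, Commute (cs.simple m) (cs.simple k))
    (hm : ∀ L ⊆ J, IrreducibleSubset cs L → Spherical cs L → K ⊆ closedPerp cs L →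
      m ∈ closedPerp cs L) :
    TwistRigidIn cs (J ∪ {m}) := by
  intro L hLT hL hLs
  rw [sdiff_union_perpIn]
  by_cases hmL : m ∈ closedPerp cs L
  · refine (hJ.mono ?_).connectedIn
    rintro x ⟨hx | rfl, hxL⟩
    exacts [hx, absurd hmL hxL]
  · have hLJ : L ⊆ J := fun x hx =>
      (hLT hx).resolve_right fun hxm => hmL (hxm ▸ Or.inl hx)
    obtain ⟨k, hkK, hkL⟩ : ∃ k ∈ K, k ∉ closedPerp cs L :=
      Set.not_subset.1 fun hKL => hmL (hm L hLJ hL hLs hKL)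
    refine connectedIn_of_forall_adjacent ⟨Or.inl (hKJ hkK), hkL⟩ ?_
    rintro x ⟨hx | rfl, -⟩
    · exact hJ x hx k (hKJ hkK)
    · exact .of_commute (hcomm k hkK)

end TwistRigidity

theorem avoiding_shadow_general (cs : CoxeterSystem M W) {T J K : Set B} {m : B}
    (hTR : TwistRigidIn cs T) (hJT : J ⊆ T)
    (hJirr : IrreducibleSubset cs J) (hJ2 : TwoSpherical cs J) (hJns : ¬ Spherical cs J)
    (hKJ : K ⊆ J) (hKsph : Spherical cs K) (hm : m ∈ T \ (J ∪ perpIn cs T J)) :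
    (∃ j ∈ J \ K, SameComponentIn cs (T \ (K ∪ perpIn cs T J)) m j) ∨
    ((∀ j ∈ J \ K, ¬ Adjacent cs m j) ∧
      (∀ k ∈ K, Commute (cs.simple m) (cs.simple k)) ∧
      TwistRigidIn cs (J ∪ {m})) := by
  refine or_iff_not_imp_left.2 fun hsep => ?_
  have hnadj : ∀ j ∈ J \ K, ¬ Adjacent cs m j := fun j hj hadj =>
    hsep ⟨j, hj, hadj.sameComponentIn
      (Set.sdiff_subset_sdiff_right (Set.union_subset_union_left _ hKJ) hm)
      ⟨hJT hj.1, fun h => h.elim hj.2 fun hperp => hperp.1.2 hj.1⟩⟩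
  have hclosed : ∀ L ⊆ J, IrreducibleSubset cs L → Spherical cs L → K ⊆ closedPerp cs L →
      m ∈ closedPerp cs L := fun L hLJ hL hLs hKL => by_contra fun hmL =>
    hsep (hTR.exists_sameComponentIn hJT hJirr hJns hLJ hL hLs hKL ⟨hm.1, hmL⟩)
  have hcomm : ∀ k ∈ K, Commute (cs.simple m) (cs.simple k) :=
    commute_of_forall_mem_closedPerp hKsph (fun hmK => hm.2 (Or.inl (hKJ hmK)))
      fun L hLK => hclosed L (hLK.trans hKJ)
  exact ⟨hnadj, hcomm, hJ2.twistRigidIn_union_singleton hKJ hcomm hclosed⟩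

/-- Lemma on avoiding the shadow: let `S` be twist-rigid, `J ⊆ S`
irreducible, 2-spherical and non-spherical, `K ⊆ J` spherical, and `m ∈ S ∖ (J ∪ J⊥)`.
Then either `m` lies in the same connected component of `S ∖ (K ∪ J⊥)` as some element of
`J ∖ K`, or `m` is not adjacent to any element of `J ∖ K`, commutes with every element of
`K`, and `J ∪ {m}` is twist-rigid. -/
theorem avoiding_shadow
    [Finite B] (cs : CoxeterSystem M W)
    (hTR : TwistRigidIn cs Set.univ)
    (J : Set B) (hJirr : IrreducibleSubset cs J) (hJ2 : TwoSpherical cs J)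
    (hJns : ¬ Spherical cs J)
    (K : Set B) (hKJ : K ⊆ J) (hKsph : Spherical cs K)
    (m : B) (hm : m ∉ J ∪ perpIn cs Set.univ J) :
    (∃ j ∈ J \ K,
        m ∈ Set.univ \ (K ∪ perpIn cs Set.univ J) ∧
        j ∈ Set.univ \ (K ∪ perpIn cs Set.univ J) ∧
        Relation.ReflTransGen
          (fun x y => x ∈ Set.univ \ (K ∪ perpIn cs Set.univ J) ∧
            y ∈ Set.univ \ (K ∪ perpIn cs Set.univ J) ∧ Adjacent cs x y) m j) ∨
    ((∀ j ∈ J \ K, ¬ Adjacent cs m j) ∧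
      (∀ k ∈ K, Commute (cs.simple m) (cs.simple k)) ∧
      TwistRigidIn cs (J ∪ {m})) :=
  avoiding_shadow_general cs hTR (Set.subset_univ J) hJirr hJ2 hJns hKJ hKsph ⟨Set.mem_univ m, hm⟩
end
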